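/- arXiv:1401.3268 — 14 statements merged into one kernel-verified Lean document; each statement's English description precedes it below -/
import Mathlib

section
/- Let n ≥ 1 and let A : Matrix (Fin (n+1)) (Fin (n+1)) ℕ with zero diagonal be the adjacency matrix of a strongly connected directed multigraph, with Laplacian Q = D − A. Then there exists a vector Σ : Fin (n+1) → ℤ with every entry strictly positive such that the left kernel of Q over ℚ, namely {w : Fin (n+1) → ℚ | Matrix.vecMul w (Q.map (↑· : ℤ → ℚ)) = 0}, is exactly the set of rational scalar multiples of Σ. -/
open Matrix

/-- The Laplacian `Q = D - A` of the directed multigraph with adjacency matrix `A`. -/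
def lap {n : ℕ} (A : Matrix (Fin (n+1)) (Fin (n+1)) ℕ) :
    Matrix (Fin (n+1)) (Fin (n+1)) ℤ :=
  Matrix.diagonal (fun i => ∑ j, (A i j : ℤ)) - A.map (fun a => (a : ℤ))

/-- Strong connectivity of a directed multigraph given by its adjacency matrix. -/
def StronglyConnected {n : ℕ} (A : Matrix (Fin (n+1)) (Fin (n+1)) ℕ) : Prop :=
  ∀ i j : Fin (n+1), i ≠ j → Relation.TransGen (fun a b => 0 < A a b) i j

/-- Entrywise form of the left kernel equation. -/
theorem ker_iff {n : ℕ} (A : Matrix (Fin (n+1)) (Fin (n+1)) ℕ) (w : Fin (n+1) → ℚ) :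
    Matrix.vecMul w ((lap A).map (fun z => (z : ℚ))) = 0 ↔
      ∀ j, w j * (∑ k, (A j k : ℚ)) = ∑ i, w i * (A i j : ℚ) := by
  rw [funext_iff]
  refine forall_congr' fun j => ?_
  simp only [lap, Matrix.vecMul, dotProduct, Matrix.map_apply, Matrix.sub_apply,
    Matrix.diagonal_apply, Pi.zero_apply]
  push_cast
  simp only [mul_sub, Finset.sum_sub_distrib, mul_ite, mul_zero, Finset.sum_ite_eq',
    Finset.mem_univ, if_true, sub_eq_zero]

theorem abs_ker {n : ℕ} (A : Matrix (Fin (n+1)) (Fin (n+1)) ℕ) (w : Fin (n+1) → ℚ)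
    (h : ∀ j, w j * (∑ k, (A j k : ℚ)) = ∑ i, w i * (A i j : ℚ)) :
    ∀ j, |w j| * (∑ k, (A j k : ℚ)) = ∑ i, |w i| * (A i j : ℚ) := by
  have hle : ∀ j ∈ Finset.univ, |w j| * (∑ k, (A j k : ℚ)) ≤ ∑ i, |w i| * (A i j : ℚ) := by
    intro j _
    have h0 : (0 : ℚ) ≤ ∑ k, (A j k : ℚ) := Finset.sum_nonneg fun k _ => Nat.cast_nonneg _
    calc |w j| * (∑ k, (A j k : ℚ)) = |w j * (∑ k, (A j k : ℚ))| := by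
          rw [abs_mul, abs_of_nonneg h0]
      _ = |∑ i, w i * (A i j : ℚ)| := by rw [h j]
      _ ≤ ∑ i, |w i * (A i j : ℚ)| := Finset.abs_sum_le_sum_abs _ _
      _ = _ := by simp [abs_mul]
  have hs : ∑ j, |w j| * (∑ k, (A j k : ℚ)) = ∑ j, ∑ i, |w i| * (A i j : ℚ) := by
    rw [Finset.sum_comm]
    simp [Finset.mul_sum]
  intro j
  exact (Finset.sum_eq_sum_iff_of_le hle).1 hs j (Finset.mem_univ j)

theorem pos_of_ker {n : ℕ} (A : Matrix (Fin (n+1)) (Fin (n+1)) ℕ) (hsc : StronglyConnected A)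
    (w : Fin (n+1) → ℚ)
    (h : ∀ j, w j * (∑ k, (A j k : ℚ)) = ∑ i, w i * (A i j : ℚ))
    (i : Fin (n+1)) (hi : w i ≠ 0) (j : Fin (n+1)) : 0 < |w j| := by
  have step : ∀ a b, 0 < |w a| → 0 < A a b → 0 < |w b| := by
    intro a b ha hab
    have h1 := abs_ker A w h b
    have h2 : |w a| * (A a b : ℚ) ≤ ∑ i, |w i| * (A i b : ℚ) :=
      Finset.single_le_sum (f := fun i => |w i| * (A i b : ℚ))
        (fun i _ => by positivity) (Finset.mem_univ a)
    have h3 : 0 < |w a| * (A a b : ℚ) := mul_pos ha (by exact_mod_cast hab)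
    rcases (abs_nonneg (w b)).eq_or_lt with h4 | h4
    · rw [← h4, zero_mul] at h1
      linarith
    · exact h4
  by_cases hij : i = j
  · subst hij; exact abs_pos.2 hi
  · have := hsc i j hij
    induction this using Relation.TransGen.head_induction_on with
    | single hab => exact step _ _ (abs_pos.2 hi) hab
    | head hab _ ih =>
      rename_i a c _
      have hc := step _ _ (abs_pos.2 hi) hab
      by_cases hcj : c = j
      · subst hcj; exact hc
      · exact ih (abs_pos.1 hc) hcj

theorem stmt0 (n : ℕ) (hn : 1 ≤ n) (A : Matrix (Fin (n+1)) (Fin (n+1)) ℕ)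
    (hdiag : ∀ i, A i i = 0) (hsc : StronglyConnected A) :
    ∃ sig : Fin (n+1) → ℤ, (∀ i, 0 < sig i) ∧
      {w : Fin (n+1) → ℚ | Matrix.vecMul w ((lap A).map (fun z => (z : ℚ))) = 0}
        = {w : Fin (n+1) → ℚ | ∃ c : ℚ, w = c • (fun i => (sig i : ℚ))} := by
  obtain ⟨w, hw0, hw⟩ : ∃ w : Fin (n+1) → ℚ, w ≠ 0 ∧
      Matrix.vecMul w ((lap A).map (fun z => (z : ℚ))) = 0 := by
    rw [Matrix.exists_vecMul_eq_zero_iff, ← Matrix.exists_mulVec_eq_zero_iff]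
    refine ⟨fun _ => 1, fun h => one_ne_zero (congrFun h 0), ?_⟩
    funext i
    simp only [lap, Matrix.mulVec, dotProduct, Matrix.map_apply, Matrix.sub_apply,
      Matrix.diagonal_apply, Pi.zero_apply]
    push_cast
    simp [Finset.sum_sub_distrib]
  rw [ker_iff] at hw
  obtain ⟨i0, hi0⟩ := Function.ne_iff.1 hw0
  have hpos := pos_of_ker A hsc w hw i0 hi0
  have hker := abs_ker A w hw
  obtain ⟨N, hN, hd⟩ : ∃ N : ℕ, 0 < N ∧ ∀ i, (|w i|).den ∣ N :=
    ⟨∏ i, (|w i|).den, Finset.prod_pos fun i _ => (|w i|).den_pos,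
      fun i => Finset.dvd_prod_of_mem (fun i => (|w i|).den) (Finset.mem_univ i)⟩
  choose m hm using hd
  have hNQ : (0 : ℚ) < N := by exact_mod_cast hN
  have hsig : ∀ i, (((|w i|).num * (m i : ℤ) : ℤ) : ℚ) = N * |w i| := by
    intro i
    have h1 : |w i| * ((|w i|).den : ℚ) = (|w i|).num := Rat.mul_den_eq_num _
    rw [hm i]
    push_cast
    rw [← h1]
    ring
  refine ⟨fun i => (|w i|).num * (m i : ℤ), fun i => ?_, ?_⟩
  · have h1 : (0 : ℚ) < (((|w i|).num * (m i : ℤ) : ℤ) : ℚ) := by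
      rw [hsig]; exact mul_pos hNQ (hpos i)
    exact_mod_cast h1
  · ext v
    simp only [Set.mem_setOf_eq, ker_iff, hsig]
    constructor
    · intro hv
      refine ⟨v 0 / (N * |w 0|), ?_⟩
      by_contra hne
      have hp0 := hpos 0
      obtain ⟨i, hi⟩ := Function.ne_iff.1 hne
      have hk : ∀ j, (fun i => v i - v 0 / |w 0| * |w i|) j * (∑ k, (A j k : ℚ)) =
          ∑ i, (fun i => v i - v 0 / |w 0| * |w i|) i * (A i j : ℚ) := by
        intro j
        simp only [sub_mul, Finset.sum_sub_distrib, mul_assoc, ← Finset.mul_sum]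
        rw [hv j, hker j]
      have := pos_of_ker A hsc _ hk i (by
        intro h0
        apply hi
        simp only [Pi.smul_apply, smul_eq_mul]
        rw [sub_eq_zero.1 h0]
        field_simp) 0
      simp [hp0.ne', div_mul_cancel₀ (v 0) hp0.ne'] at this
    · rintro ⟨c, rfl⟩ j
      simp only [Pi.smul_apply, smul_eq_mul, mul_assoc, ← Finset.mul_sum]
      rw [hker j]
end

section
/- Let n ≥ 1 and let A : Matrix (Fin (n+1)) (Fin (n+1)) ℕ with zero diagonal be the adjacency matrix of a directed multigraph with Laplacian Q = D − A. Suppose there exists a vector Σ : Fin (n+1) → ℤ with every entry strictly positive such that Matrix.vecMul Σ Q = 0 and such that every w : Fin (n+1) → ℚ with Matrix.vecMul w (Q.map (↑· : ℤ → ℚ)) = 0 is a rational scalar multiple of Σ. Then the directed multigraph is strongly connected. -/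
open Matrix

theorem stmt1 (n : ℕ) (hn : 1 ≤ n) (A : Matrix (Fin (n+1)) (Fin (n+1)) ℕ)
    (hdiag : ∀ i, A i i = 0)
    (sig : Fin (n+1) → ℤ) (hpos : ∀ i, 0 < sig i)
    (hker : Matrix.vecMul sig (lap A) = 0)
    (hspan : ∀ w : Fin (n+1) → ℚ,
      Matrix.vecMul w ((lap A).map (fun z => (z : ℚ))) = 0 →
        ∃ c : ℚ, w = c • (fun i => (sig i : ℚ))) :
    StronglyConnected A := by
  classical
  have hcons : ∀ k, sig k * ∑ j, (A k j : ℤ) = ∑ i, sig i * (A i k : ℤ) := by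
    intro k
    have h := congrFun hker k
    simp only [lap, Matrix.vecMul_sub, Pi.sub_apply, Matrix.vecMul_diagonal, Pi.zero_apply] at h
    simp only [Matrix.vecMul, dotProduct, Matrix.map_apply] at h
    linarith
  intro a b hab
  by_contra hnot
  obtain ⟨χ, hχ⟩ : ∃ χ : Fin (n+1) → ℤ, χ = fun k =>
      if Relation.ReflTransGen (fun a b => 0 < A a b) a k then 1 else 0 := ⟨_, rfl⟩
  have hχa : χ a = 1 := by
    rw [hχ]; simp [Relation.ReflTransGen.refl]
  have hχb : χ b = 0 := by
    rw [hχ]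
    have : ¬ Relation.ReflTransGen (fun a b => 0 < A a b) a b := by
      intro h
      rcases Relation.reflTransGen_iff_eq_or_transGen.1 h with h | h
      · exact hab h.symm
      · exact hnot h
    simp [this]
  have hmono : ∀ i k, 0 < A i k → χ i ≤ χ k := by
    intro i k h
    rw [hχ]
    by_cases hi : Relation.ReflTransGen (fun a b => 0 < A a b) a i
    · have hk : Relation.ReflTransGen (fun a b => 0 < A a b) a k := hi.tail h
      simp [hi, hk]
    · simp only [hi, if_false]
      split_ifs <;> simp
  have hnn : ∀ i k, 0 ≤ sig i * (A i k : ℤ) * (χ k - χ i) := by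
    intro i k
    rcases Nat.eq_zero_or_pos (A i k) with h | h
    · simp [h]
    · exact mul_nonneg (mul_nonneg (hpos i).le (by positivity)) (sub_nonneg.2 (hmono i k h))
  have hsum : ∑ i, ∑ k, sig i * (A i k : ℤ) * (χ k - χ i) = 0 := by
    have h1 : ∑ i, ∑ k, sig i * (A i k : ℤ) * χ k = ∑ k, χ k * (sig k * ∑ j, (A k j : ℤ)) := by
      rw [Finset.sum_comm]
      refine Finset.sum_congr rfl fun k _ => ?_
      rw [hcons, Finset.mul_sum]
      exact Finset.sum_congr rfl fun i _ => by ring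
    have h2 : ∑ i, ∑ k, sig i * (A i k : ℤ) * χ i = ∑ k, χ k * (sig k * ∑ j, (A k j : ℤ)) := by
      refine Finset.sum_congr rfl fun k _ => ?_
      rw [Finset.mul_sum, Finset.mul_sum]
      exact Finset.sum_congr rfl fun i _ => by ring
    simp only [mul_sub, Finset.sum_sub_distrib]
    rw [h1, h2, sub_self]
  have hzero : ∀ i k, sig i * (A i k : ℤ) * (χ k - χ i) = 0 := by
    intro i k
    have h1 := (Finset.sum_eq_zero_iff_of_nonneg
      (fun i _ => Finset.sum_nonneg fun k _ => hnn i k)).1 hsum i (Finset.mem_univ i)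
    exact (Finset.sum_eq_zero_iff_of_nonneg (fun k _ => hnn i k)).1 h1 k (Finset.mem_univ k)
  have hw : Matrix.vecMul (fun i => χ i * sig i) (lap A) = 0 := by
    funext k
    simp only [lap, Matrix.vecMul_sub, Pi.sub_apply, Matrix.vecMul_diagonal, Pi.zero_apply]
    simp only [Matrix.vecMul, dotProduct, Matrix.map_apply]
    rw [mul_assoc, hcons, Finset.mul_sum, ← Finset.sum_sub_distrib]
    refine Finset.sum_eq_zero fun i _ => ?_
    linarith [hzero i k]
  obtain ⟨c, hc⟩ := hspan (fun i => ((χ i * sig i : ℤ) : ℚ)) (by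
    funext k
    have h := congrFun hw k
    simp only [Matrix.vecMul, dotProduct, Matrix.map_apply, Pi.zero_apply] at h ⊢
    exact_mod_cast h)
  have ha := congrFun hc a
  have hb := congrFun hc b
  have pa : (sig a : ℚ) ≠ 0 := by exact_mod_cast (hpos a).ne'
  have pb : (sig b : ℚ) ≠ 0 := by exact_mod_cast (hpos b).ne'
  simp [hχa, hχb, pa, pb] at ha hb
  simp [hb] at ha
end

section
/- Let n ≥ 1 and let A : Matrix (Fin (n+1)) (Fin (n+1)) ℕ with zero diagonal be the adjacency matrix of a strongly connected directed multigraph with Laplacian Q = D − A. Then every nonzero vector w : Fin (n+1) → ℝ with Matrix.vecMul w (Q.map (↑· : ℤ → ℝ)) = 0 has either all entries strictly positive or all entries strictly negative. -/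
open Matrix

/-- A nonnegative vector in the left kernel is everywhere zero or everywhere positive. -/
theorem nonneg_kernel_dichotomy {n : ℕ} (A : Matrix (Fin (n+1)) (Fin (n+1)) ℕ)
    (hsc : StronglyConnected A) (u : Fin (n+1) → ℝ) (hu : ∀ i, 0 ≤ u i)
    (hk : ∀ j, u j * ∑ k, (A j k : ℝ) = ∑ i, u i * (A i j : ℝ)) :
    (∀ i, u i = 0) ∨ (∀ i, 0 < u i) := by
  by_cases h : ∃ j, u j = 0
  · left
    obtain ⟨j, hj⟩ := h
    have step : ∀ a b, 0 < A a b → u b = 0 → u a = 0 := by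
      intro a b hab hb
      have h1 := hk b
      rw [hb, zero_mul] at h1
      have h2 := (Finset.sum_eq_zero_iff_of_nonneg
        (fun i _ => mul_nonneg (hu i) (Nat.cast_nonneg (A i b)))).1 h1.symm a (Finset.mem_univ a)
      rcases mul_eq_zero.1 h2 with h3 | h3
      · exact h3
      · have h4 : A a b = 0 := by exact_mod_cast h3
        omega
    intro i
    by_cases hij : i = j
    · rw [hij, hj]
    · have ht := hsc i j hij
      induction ht using Relation.TransGen.head_induction_on with
      | single h => exact step _ _ h hj
      | head h _ ih =>
        rename_i a c _
        refine step _ _ h ?_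
        by_cases hc : c = j
        · rw [hc, hj]
        · exact ih hc
  · right
    push Not at h
    exact fun i => lt_of_le_of_ne (hu i) (h i).symm

theorem stmt2 (n : ℕ) (hn : 1 ≤ n) (A : Matrix (Fin (n+1)) (Fin (n+1)) ℕ)
    (hdiag : ∀ i, A i i = 0) (hsc : StronglyConnected A)
    (w : Fin (n+1) → ℝ) (hw : w ≠ 0)
    (hker : Matrix.vecMul w ((lap A).map (fun z => (z : ℝ))) = 0) :
    (∀ i, 0 < w i) ∨ (∀ i, w i < 0) := by
  have hk : ∀ j, w j * ∑ k, (A j k : ℝ) = ∑ i, w i * (A i j : ℝ) := by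
    intro j
    have h := congrFun hker j
    simp only [Matrix.vecMul, dotProduct, lap, Matrix.map_apply, Matrix.sub_apply,
      Matrix.diagonal_apply, Pi.zero_apply] at h
    push_cast at h
    simp only [mul_sub, Finset.sum_sub_distrib, mul_ite, mul_zero, Finset.sum_ite_eq',
      Finset.mem_univ, if_true] at h
    linarith
  have hle : ∀ j ∈ Finset.univ, |w j| * ∑ k, (A j k : ℝ) ≤ ∑ i, |w i| * (A i j : ℝ) := by
    intro j _
    have h0 : (0 : ℝ) ≤ ∑ k, (A j k : ℝ) := Finset.sum_nonneg fun k _ => Nat.cast_nonneg _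
    calc |w j| * ∑ k, (A j k : ℝ) = |∑ i, w i * (A i j : ℝ)| := by
          rw [← hk j, abs_mul, abs_of_nonneg h0]
      _ ≤ ∑ i, |w i * (A i j : ℝ)| := Finset.abs_sum_le_sum_abs _ _
      _ = ∑ i, |w i| * (A i j : ℝ) := by simp [abs_mul]
  have hsum : ∑ j, |w j| * ∑ k, (A j k : ℝ) = ∑ j, ∑ i, |w i| * (A i j : ℝ) := by
    rw [Finset.sum_comm]
    simp [Finset.mul_sum]
  have habs : ∀ j, |w j| * ∑ k, (A j k : ℝ) = ∑ i, |w i| * (A i j : ℝ) := fun j =>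
    (Finset.sum_eq_sum_iff_of_le hle).1 hsum j (Finset.mem_univ j)
  have hpos : ∀ i, 0 < |w i| := by
    rcases nonneg_kernel_dichotomy A hsc (fun i => |w i|) (fun i => abs_nonneg _) habs with h | h
    · exact absurd (funext fun i => abs_eq_zero.1 (h i)) hw
    · exact h
  rcases nonneg_kernel_dichotomy A hsc (fun i => |w i| - w i)
    (fun i => sub_nonneg.2 (le_abs_self _))
    (fun j => by simp only [sub_mul, Finset.sum_sub_distrib, habs j, hk j]) with h | h
  · left
    intro i
    have h1 : |w i| - w i = 0 := h i
    linarith [hpos i]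
  · right
    intro i
    by_contra hc
    have h1 : 0 < |w i| - w i := h i
    rw [abs_of_nonneg (not_lt.1 hc)] at h1
    linarith
end

section
/- Let m ≥ 1 and let L be an additive subgroup of ℤ^m (functions Fin m → ℤ) of rank m. Then there exists an integer matrix M : Matrix (Fin m) (Fin m) ℤ such that: (i) the rows of M form a ℤ-basis of L; (ii) M i j ≤ 0 for all i ≠ j; (iii) every row sum ∑_j M i j is nonnegative; and (iv) for every index i there is a finite sequence i = i_0, i_1, …, i_r in Fin m with M i_t i_{t+1} < 0 for each t < r and with ∑_j M i_r j > 0. (Conditions (ii)–(iv) say exactly that M is the reduced Laplacian of a directed multigraph on vertices {v_0, v_1, …, v_m}, obtained by deleting the row and column of v_0, in which v_0 is globally reachable, i.e., every vertex has a directed path to v_0.) -/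
open Matrix

/-- Tail sums `S j x = ∑_{k ≥ j} x k`. -/
def tailSum {m : ℕ} (j : ℕ) : (Fin m → ℤ) →ₗ[ℤ] ℤ :=
  ∑ k : Fin m, if j ≤ (k : ℕ) then LinearMap.proj k else 0

theorem tailSum_apply {m : ℕ} (j : ℕ) (x : Fin m → ℤ) :
    tailSum j x = ∑ k : Fin m, if j ≤ (k : ℕ) then x k else 0 := by
  unfold tailSum
  rw [LinearMap.sum_apply]
  refine Finset.sum_congr rfl fun k _ => ?_
  split_ifs <;> simp

theorem tailSum_single {m : ℕ} (j : ℕ) (a : Fin m) (c : ℤ) :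
    tailSum j (Pi.single a c) = if j ≤ (a : ℕ) then c else 0 := by
  rw [tailSum_apply, Finset.sum_eq_single a]
  · simp
  · intro b _ hb
    simp [hb]
  · simp

theorem tailSum_sub {m : ℕ} (j : Fin m) (x : Fin m → ℤ) :
    x j = tailSum (j : ℕ) x - tailSum ((j : ℕ) + 1) x := by
  rw [tailSum_apply, tailSum_apply, ← Finset.sum_sub_distrib, Finset.sum_eq_single j]
  · simp
  · intro b _ hb
    have : (b : ℕ) ≠ j := fun h => hb (Fin.ext h)
    split_ifs <;> omega
  · simp

theorem tailSum_top {m : ℕ} (j : ℕ) (hj : m ≤ j) (x : Fin m → ℤ) : tailSum j x = 0 := by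
  rw [tailSum_apply]
  refine Finset.sum_eq_zero fun k _ => ?_
  rw [if_neg]
  omega

theorem tailSum_zero {m : ℕ} (x : Fin m → ℤ) : tailSum 0 x = ∑ k, x k := by
  simp [tailSum_apply]

theorem exists_mult {m : ℕ} (L : Submodule ℤ (Fin m → ℤ))
    (hrank : Module.finrank ℤ L = m) :
    ∃ N : ℤ, 0 < N ∧ ∀ x, N • x ∈ L := by
  have : Finite ((Fin m → ℤ) ⧸ L) := by
    apply Submodule.finiteQuotientOfFreeOfRankEq
    simpa using hrank
  refine ⟨Nat.card ((Fin m → ℤ) ⧸ L), by exact_mod_cast Nat.card_pos, fun x => ?_⟩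
  rw [← Submodule.Quotient.mk_eq_zero, Submodule.Quotient.mk_smul, natCast_zsmul]
  exact card_nsmul_eq_zero'

theorem exists_row {m : ℕ} (L : Submodule ℤ (Fin m → ℤ)) (N : ℤ) (hN : 0 < N)
    (hL : ∀ x, N • x ∈ L) (i : Fin m) :
    ∃ x ∈ L, (∀ j < (i : ℕ), tailSum j x = 0) ∧ 0 < tailSum (i : ℕ) x ∧
      (∀ k, i < k → x k ≤ 0) ∧
      ∀ y ∈ L, (∀ j < (i : ℕ), tailSum j y = 0) → tailSum (i : ℕ) x ∣ tailSum (i : ℕ) y := by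
  classical
  let K : Submodule ℤ (Fin m → ℤ) := L ⊓ ⨅ j : Fin i, LinearMap.ker (tailSum (j : ℕ))
  have hK : ∀ x, x ∈ K ↔ x ∈ L ∧ ∀ j < (i : ℕ), tailSum j x = 0 := by
    intro x
    simp only [K, Submodule.mem_inf, Submodule.mem_iInf, LinearMap.mem_ker]
    exact and_congr_right fun _ => ⟨fun h j hj => h ⟨j, hj⟩, fun h j => h j j.2⟩
  obtain ⟨g, hg⟩ := (IsPrincipalIdealRing.principal (K.map (tailSum (i : ℕ)))).principal
  have hdvd : ∀ y ∈ K, g ∣ tailSum (i : ℕ) y := by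
    intro y hy
    have : tailSum (i : ℕ) y ∈ K.map (tailSum (i : ℕ)) := Submodule.mem_map_of_mem hy
    rw [hg] at this
    exact Ideal.mem_span_singleton.1 this
  have hg0 : g ≠ 0 := by
    -- a vector `w` with `S i w = 1` and `S j w = 0` for `j < i`
    obtain ⟨w, hw, hw'⟩ : ∃ w : Fin m → ℤ, (∀ j < (i : ℕ), tailSum j w = 0) ∧
        tailSum (i : ℕ) w = 1 := by
      by_cases h0 : (i : ℕ) = 0
      · refine ⟨Pi.single i 1, fun j hj => by omega, by simp [tailSum_single]⟩
      · refine ⟨Pi.single i 1 - Pi.single ⟨i - 1, by omega⟩ 1, fun j hj => ?_, ?_⟩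
        · rw [map_sub, tailSum_single, tailSum_single, if_pos hj.le, if_pos, sub_self]
          simp only; omega
        · rw [map_sub, tailSum_single, tailSum_single, if_pos le_rfl, if_neg, sub_zero]
          simp only; omega
    have h1 := hdvd (N • w) ((hK _).2 ⟨hL w, fun j hj => by rw [map_smul, hw j hj, smul_zero]⟩)
    rw [map_smul, hw', smul_eq_mul, mul_one] at h1
    rintro rfl
    have := zero_dvd_iff.1 h1
    omega
  obtain ⟨x, hx, hxg⟩ : ∃ x ∈ K, tailSum (i : ℕ) x = |g| := by
    have : |g| ∈ K.map (tailSum (i : ℕ)) := by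
      rw [hg]
      exact Ideal.mem_span_singleton.2 ((dvd_abs g g).2 dvd_rfl)
    exact Submodule.mem_map.1 this
  obtain ⟨hxL, hx0⟩ := (hK x).1 hx
  let z : Fin m → ℤ := ∑ k : Fin m, if i < k then
    |x k| • (Pi.single k 1 - Pi.single i 1 : Fin m → ℤ) else 0
  have hz : ∀ j ≤ (i : ℕ), tailSum j z = 0 := by
    intro j hj
    simp only [z, map_sum]
    refine Finset.sum_eq_zero fun k _ => ?_
    split_ifs with h
    · have : (i : ℕ) < k := h
      rw [map_smul, map_sub, tailSum_single, tailSum_single, if_pos hj, if_pos (by omega)]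
      simp
    · simp
  have hzk : ∀ k, i < k → z k = |x k| := by
    intro k hk
    simp only [z, Finset.sum_apply]
    rw [Finset.sum_eq_single k]
    · simp [hk, hk.ne']
    · intro b _ hb
      split_ifs
      · simp [hk.ne', hb.symm]
      · simp
    · simp
  refine ⟨x - N • z, L.sub_mem hxL (hL z), fun j hj => ?_, ?_, fun k hk => ?_, fun y hy hy0 => ?_⟩
  · rw [map_sub, map_smul, hz j hj.le, hx0 j hj]; simp
  · rw [map_sub, map_smul, hz _ le_rfl, hxg]; simpa using hg0
  · rw [Pi.sub_apply, Pi.smul_apply, hzk k hk, smul_eq_mul]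
    nlinarith [le_abs_self (x k), abs_nonneg (x k)]
  · rw [map_sub, map_smul, hz _ le_rfl, hxg, smul_zero, sub_zero, abs_dvd]
    exact hdvd y ((hK y).2 ⟨hy, hy0⟩)

theorem stmt3 (m : ℕ) (hm : 1 ≤ m) (L : Submodule ℤ (Fin m → ℤ))
    (hrank : Module.finrank ℤ L = m) :
    ∃ M : Matrix (Fin m) (Fin m) ℤ,
      -- (i) the rows of `M` form a `ℤ`-basis of `L`
      LinearIndependent ℤ (fun i => M i) ∧
      Submodule.span ℤ (Set.range (fun i => M i)) = L ∧
      -- (ii) off-diagonal entries are nonpositive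
      (∀ i j, i ≠ j → M i j ≤ 0) ∧
      -- (iii) all row sums are nonnegative
      (∀ i, 0 ≤ ∑ j, M i j) ∧
      -- (iv) from every row one can reach, following negative entries,
      -- a row with strictly positive row sum
      (∀ i : Fin m, ∃ r : ℕ, ∃ seq : Fin (r+1) → Fin m, seq 0 = i ∧
        (∀ t : Fin r, M (seq t.castSucc) (seq t.succ) < 0) ∧
        0 < ∑ j, M (seq (Fin.last r)) j) := by
  obtain ⟨N, hN, hNL⟩ := exists_mult L hrank
  choose M hML hM0 hMpos hMneg hMdvd using exists_row L N hN hNL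
  refine ⟨M, ?_, ?_, ?_, ?_, ?_⟩
  · let U : Matrix (Fin m) (Fin m) ℤ := fun k j => if (j : ℕ) ≤ k then 1 else 0
    have hA : ∀ i j : Fin m, (Matrix.of M * U) i j = tailSum (j : ℕ) (M i) := by
      intro i j
      rw [Matrix.mul_apply, tailSum_apply]
      simp [U]
    have hdet : (Matrix.of M * U).det ≠ 0 := by
      rw [Matrix.det_of_isUpperTriangular]
      · refine Finset.prod_ne_zero_iff.2 fun i _ => ?_
        rw [hA]
        exact (hMpos i).ne'
      · intro i j hij
        rw [hA]
        exact hM0 i j hij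
    rw [Matrix.det_mul] at hdet
    exact Matrix.linearIndependent_rows_of_det_ne_zero (left_ne_zero_of_mul hdet)
  · apply le_antisymm
    · rw [Submodule.span_le]
      rintro _ ⟨i, rfl⟩
      exact hML i
    · have key : ∀ d i : ℕ, i + d = m → ∀ y ∈ L, (∀ j < i, tailSum j y = 0) →
          y ∈ Submodule.span ℤ (Set.range (fun i => M i)) := by
        intro d
        induction d with
        | zero =>
          intro i hi y hy h0
          have : y = 0 := by
            ext j
            rw [tailSum_sub j y, h0 j (by omega)]
            by_cases h : (j : ℕ) + 1 < m
            · rw [h0 _ (by omega)]; rfl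
            · rw [tailSum_top _ (by omega)]; rfl
          rw [this]
          exact Submodule.zero_mem _
        | succ d ih =>
          intro i hi y hy h0
          obtain ⟨c, hc⟩ := hMdvd ⟨i, by omega⟩ y hy h0
          have h1 := ih (i + 1) (by omega) (y - c • M ⟨i, by omega⟩)
            (L.sub_mem hy (L.smul_mem _ (hML _))) (by
              intro j hj
              rw [map_sub, map_smul]
              rcases Nat.lt_succ_iff_lt_or_eq.1 hj with h | rfl
              · rw [h0 j h, hM0 _ j h]; simp
              · simp only at hc
                rw [hc, smul_eq_mul]; ring)
          have h2 := Submodule.add_mem _ h1 (Submodule.smul_mem _ c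
            (Submodule.subset_span (Set.mem_range_self (f := fun i => M i) ⟨i, by omega⟩)))
          simpa using h2
      intro y hy
      exact key m 0 (by omega) y hy (by omega)
  · intro i j hij
    rcases lt_or_gt_of_ne hij with h | h
    · exact hMneg i j h
    · have h' : (j : ℕ) < i := h
      rw [tailSum_sub j (M i), hM0 i j h']
      rcases Nat.lt_or_ge ((j : ℕ) + 1) i with h2 | h2
      · rw [hM0 i _ h2]; rfl
      · have : (j : ℕ) + 1 = i := by omega
        rw [this]
        linarith [hMpos i]
  · intro i
    rw [← tailSum_zero]
    rcases Nat.eq_zero_or_pos (i : ℕ) with h | h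
    · have := hMpos i
      rw [h] at this
      exact this.le
    · exact (hM0 i 0 h).ge
  · intro i
    refine ⟨i, fun t => ⟨i - t, by omega⟩, ?_, ?_, ?_⟩
    · simp
    · intro t
      have ht := t.2
      rw [tailSum_sub _ (M _), hM0]
      · have h := hMpos ⟨i - t, by omega⟩
        simp only [Fin.val_castSucc, Fin.val_succ] at h ⊢
        have e : (i : ℕ) - (t + 1) + 1 = i - t := by omega
        rw [e]
        linarith
      · simp only [Fin.val_castSucc, Fin.val_succ]
        omega
    · rw [← tailSum_zero]
      have h := hMpos ⟨0, by omega⟩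
      simpa using h
end

section
/- Let n ≥ 1, let A_n = {x : Fin (n+1) → ℤ | ∑_i x i = 0}, and let L be an additive subgroup of A_n of rank n (equivalently, of finite index in A_n). Then there exists an adjacency matrix A : Matrix (Fin (n+1)) (Fin (n+1)) ℕ with zero diagonal of a strongly connected directed multigraph, with Laplacian Q = D − A, and a strictly positive vector Σ : Fin (n+1) → ℤ with Matrix.vecMul Σ Q = 0, Σ 0 = 1, and gcd of the entries of Σ equal to 1, such that the ℤ-span of the rows of Q equals L. -/
open Matrix

/-- Adjacency matrix read off from a Laplacian-like matrix. -/
def adjOf {n : ℕ} (R : Matrix (Fin (n+1)) (Fin (n+1)) ℤ) : Matrix (Fin (n+1)) (Fin (n+1)) ℕ :=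
  fun i j => if i = j then 0 else (-(R i j)).toNat

lemma lap_adjOf {n : ℕ} (R : Matrix (Fin (n+1)) (Fin (n+1)) ℤ)
    (hs : ∀ i, ∑ j, R i j = 0) (ho : ∀ i j, i ≠ j → R i j ≤ 0) : lap (adjOf R) = R := by
  have key : ∀ i j, ((adjOf R i j : ℕ) : ℤ) = (if i = j then R i i else 0) - R i j := by
    intro i j
    unfold adjOf
    by_cases h : i = j
    · subst h; simp
    · have := ho i j h
      simp only [h, if_false]
      omega
  ext i j
  unfold lap
  simp only [Matrix.sub_apply, Matrix.map_apply, Matrix.diagonal_apply, key]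
  simp only [Finset.sum_sub_distrib, hs i]
  by_cases h : i = j
  · subst h; simp
  · simp [h]

lemma nsmul_mem_cone {M : Type*} [AddCommGroup M] (S : Submodule ℕ M) {x : M} (hx : x ∈ S)
    {a : ℤ} (ha : 0 ≤ a) : a • x ∈ S := by
  lift a to ℕ using ha
  rw [natCast_zsmul]
  exact S.smul_mem a hx

/-- Prepend a zero coordinate. -/
def consZ (m : ℕ) : (Fin m → ℤ) →ₗ[ℤ] (Fin (m+1) → ℤ) where
  toFun x := Fin.cons 0 x
  map_add' x y := by
    ext i; refine Fin.cases ?_ (fun i => ?_) i <;> simp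
  map_smul' c x := by
    ext i; refine Fin.cases ?_ (fun i => ?_) i <;> simp

@[simp] lemma consZ_zero (m : ℕ) (x : Fin m → ℤ) : consZ m x 0 = 0 := rfl
@[simp] lemma consZ_succ (m : ℕ) (x : Fin m → ℤ) (i : Fin m) : consZ m x i.succ = x i := rfl

/-- The root `e_j - e_0`. -/
def root {n : ℕ} (j : Fin n) : Fin (n+1) → ℤ := Pi.single j.succ 1 - Pi.single 0 1

lemma root_succ {n : ℕ} (j k : Fin n) : root j k.succ = if k = j then 1 else 0 := by
  simp [root, Pi.single_apply]

lemma root_zero {n : ℕ} (j : Fin n) : root j 0 = -1 := by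
  simp [root, Pi.single_apply, (Fin.succ_ne_zero j).symm]

lemma root_sum {n : ℕ} (j : Fin n) : ∑ k, root j k = 0 := by
  rw [Fin.sum_univ_succ, root_zero]
  simp [root_succ]

lemma ext_of_sum {n : ℕ} {x y : Fin (n+1) → ℤ} (hx : ∑ i, x i = 0) (hy : ∑ i, y i = 0)
    (h : ∀ i : Fin n, x i.succ = y i.succ) : x = y := by
  rw [Fin.sum_univ_succ] at hx hy
  have h2 : ∑ i : Fin n, x i.succ = ∑ i : Fin n, y i.succ := Finset.sum_congr rfl fun i _ => h i
  ext i
  refine Fin.cases ?_ h i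
  omega

lemma main_lemma (n : ℕ) : ∀ (L : Submodule ℤ (Fin (n+1) → ℤ))
    (_ : ∀ x ∈ L, ∑ i, x i = 0)
    (_ : ∀ x : Fin (n+1) → ℤ, ∑ i, x i = 0 → ∃ d : ℤ, 0 < d ∧ d • x ∈ L),
    ∃ q : Fin n → (Fin (n+1) → ℤ), Submodule.span ℤ (Set.range q) = L ∧
      (∀ i j, j ≠ i.succ → q i j ≤ 0) ∧
      (∀ a, Relation.ReflTransGen (fun a b : Fin (n+1) => ∃ i, a = i.succ ∧ q i b < 0) a 0) ∧
      ∃ d : ℤ, 0 < d ∧ ∀ j : Fin n, d • root j ∈ Submodule.span ℕ (Set.range q) := by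
  induction n with
  | zero =>
    intro L hL _
    refine ⟨Fin.elim0, ?_, fun i => i.elim0, ?_, 1, one_pos, fun j => j.elim0⟩
    · symm
      rw [Set.range_eq_empty, Submodule.span_empty, Submodule.eq_bot_iff]
      intro x hx
      have := hL x hx
      ext i
      fin_cases i
      simpa using this
    · intro a
      have : a = 0 := by ext; simp
      rw [this]
  | succ n ih =>
    intro L hL hD
    obtain ⟨q, hspan, hoff, hreach, d, hd, hcone⟩ := ih (L.comap (consZ (n+1)))
      (fun x hx => by
        have := hL _ hx
        rw [Fin.sum_univ_succ] at this
        simpa using this)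
      (fun x hx => by
        obtain ⟨d, hd, h⟩ := hD (consZ _ x) (by rw [Fin.sum_univ_succ]; simpa using hx)
        exact ⟨d, hd, by rw [Submodule.mem_comap, map_smul]; exact h⟩)
    -- the element h
    obtain ⟨h, hhL, e, he, hh0, hdiv⟩ : ∃ h ∈ L, ∃ e : ℤ, 0 < e ∧ h 0 = -e ∧
        ∀ x ∈ L, e ∣ x 0 := by
      obtain ⟨g, hg⟩ := (IsPrincipalIdealRing.principal
        (L.map (LinearMap.proj (R := ℤ) (φ := fun _ : Fin (n+1+1) => ℤ) 0))).principal
      have hdv : ∀ x ∈ L, g ∣ x 0 := by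
        intro x hx
        have : x 0 ∈ L.map (LinearMap.proj (R := ℤ) (φ := fun _ : Fin (n+1+1) => ℤ) 0) :=
          ⟨x, hx, rfl⟩
        rw [hg] at this
        exact Ideal.mem_span_singleton.mp this
      have hg0 : g ≠ 0 := by
        rintro rfl
        obtain ⟨d', hd', hm⟩ := hD (root 0) (root_sum 0)
        have := hdv _ hm
        simp [root_zero] at this
        omega
      have hgm : g ∈ L.map (LinearMap.proj (R := ℤ) (φ := fun _ : Fin (n+1+1) => ℤ) 0) := by
        rw [hg]; exact Submodule.mem_span_singleton_self g
      obtain ⟨y, hy, hyg⟩ := hgm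
      have hyg' : y 0 = g := hyg
      rcases lt_or_gt_of_ne hg0 with hlt | hgt
      · exact ⟨y, hy, -g, by omega, by omega, fun x hx => by simpa using hdv x hx⟩
      · exact ⟨-y, L.neg_mem hy, g, hgt, by simp [hyg'], hdv⟩
    set k : Fin n → ℤ := fun j => |h j.succ.succ| + 1 with hk
    have hconeZ : Submodule.span ℕ (Set.range q) ≤
        (Submodule.span ℤ (Set.range q)).restrictScalars ℕ := by
      rw [Submodule.span_le]; exact Submodule.subset_span
    have hrootL : ∀ j, consZ _ (d • root j) ∈ L := by
      intro j
      have h1 := hconeZ (hcone j)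
      rw [Submodule.restrictScalars_mem, hspan] at h1
      exact h1
    set h' : Fin (n+1+1) → ℤ := h - ∑ j, k j • consZ _ (d • root j) with hh'
    have hh'L : h' ∈ L :=
      L.sub_mem hhL (L.sum_mem fun j _ => L.smul_mem _ (hrootL j))
    have hh'0 : h' 0 = -e := by simp [hh', hh0]
    have hh's : ∀ j : Fin n, h' j.succ.succ = h j.succ.succ - k j * d := by
      intro j
      simp [hh', root_succ]
    have hneg : ∀ j : Fin n, h' j.succ.succ < 0 := by
      intro j
      rw [hh's]
      have := le_abs_self (h j.succ.succ)
      have := abs_nonneg (h j.succ.succ)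
      simp only [hk]
      nlinarith
    set q' : Fin (n+1) → (Fin (n+1+1) → ℤ) := Fin.cons h' (fun i => consZ _ (q i)) with hq'
    have q'0 : q' 0 = h' := rfl
    have q's : ∀ i : Fin n, q' i.succ = consZ _ (q i) := fun i => rfl
    have hup : ∀ x ∈ Submodule.span ℕ (Set.range q),
        consZ _ x ∈ Submodule.span ℕ (Set.range q') := by
      intro x hx
      induction hx using Submodule.span_induction with
      | mem x hx =>
        obtain ⟨i, rfl⟩ := hx
        exact Submodule.subset_span ⟨i.succ, rfl⟩
      | zero => simp
      | add x y _ _ hx hy => rw [map_add]; exact add_mem hx hy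
      | smul a x _ hx => rw [map_nsmul]; exact Submodule.smul_mem _ _ hx
    have hupZ : ∀ x ∈ Submodule.span ℤ (Set.range q),
        consZ _ x ∈ Submodule.span ℤ (Set.range q') := by
      intro x hx
      induction hx using Submodule.span_induction with
      | mem x hx =>
        obtain ⟨i, rfl⟩ := hx
        exact Submodule.subset_span ⟨i.succ, rfl⟩
      | zero => simp
      | add x y _ _ hx hy => rw [map_add]; exact add_mem hx hy
      | smul a x _ hx => rw [map_smul]; exact Submodule.smul_mem _ _ hx
    have hq'L : ∀ i, q' i ∈ L := by
      intro i
      refine Fin.cases hh'L (fun i => ?_) i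
      have : q i ∈ L.comap (consZ (n+1)) := hspan ▸ Submodule.subset_span ⟨i, rfl⟩
      exact this
    have hroot0 : (d * e) • root (0 : Fin (n+1)) ∈ Submodule.span ℕ (Set.range q') := by
      have heq : (d * e) • root (0 : Fin (n+1)) =
          d • h' + ∑ j : Fin n, (-(h' j.succ.succ)) • consZ _ (d • root j) := by
        have hz : ∀ j : Fin n, ∑ i, consZ _ (d • root j) i = 0 := by
          intro j
          rw [Fin.sum_univ_succ]
          simp [← Finset.mul_sum, root_sum]
        have hsL : ∑ i, h' i = 0 := hL _ hh'L
        have e1 : ∑ i : Fin (n+1+1), ((d * e) • root (0 : Fin (n+1))) i = 0 := by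
          simp [← Finset.mul_sum, root_sum]
        have hs1 : h' (Fin.succ 0) = e - ∑ j : Fin n, h' j.succ.succ := by
          rw [Fin.sum_univ_succ, Fin.sum_univ_succ, hh'0] at hsL
          linarith
        ext i
        refine Fin.cases ?_ (fun i => ?_) i
        · simp [hh'0, root_zero]
        · refine Fin.cases ?_ (fun i => ?_) i
          · simp only [Pi.add_apply, Pi.smul_apply, hs1, Finset.sum_apply, consZ_succ, root_succ,
              root_zero, smul_eq_mul]
            rw [mul_sub, Finset.mul_sum, sub_add, ← Finset.sum_sub_distrib]
            rw [Finset.sum_eq_zero]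
            · simp
            · intro j _; ring
          · simp [root_succ]
            ring
      rw [heq]
      have hm : h' ∈ Submodule.span ℕ (Set.range q') := Submodule.subset_span ⟨0, rfl⟩
      refine add_mem (nsmul_mem_cone _ hm hd.le)
        (sum_mem fun j _ => nsmul_mem_cone _ (hup _ (hcone j)) ?_)
      have := hneg j
      omega
    refine ⟨q', ?_, ?_, ?_, d * e, mul_pos hd he, ?_⟩
    · apply le_antisymm
      · rw [Submodule.span_le]
        rintro _ ⟨i, rfl⟩
        exact hq'L i
      · intro x hx
        obtain ⟨c, hc⟩ := hdiv x hx
        have hx2 : x + c • h' ∈ L := L.add_mem hx (L.smul_mem _ hh'L)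
        have hx3 : x + c • h' = consZ _ (fun i => (x + c • h') i.succ) := by
          ext i
          refine Fin.cases ?_ (fun i => ?_) i
          · simp [hc, hh'0]; ring
          · rfl
        have hx4 : (fun i => (x + c • h') i.succ) ∈ Submodule.span ℤ (Set.range q) := by
          rw [hspan, Submodule.mem_comap, ← hx3]; exact hx2
        have hx5 := hupZ _ hx4
        rw [← hx3] at hx5
        have : x = (x + c • h') - c • h' := by abel
        rw [this]
        exact Submodule.sub_mem _ hx5 (Submodule.smul_mem _ _ (Submodule.subset_span ⟨0, rfl⟩))
    · intro i
      refine Fin.cases ?_ (fun i => ?_) i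
      · intro j
        rw [q'0]
        refine Fin.cases ?_ (fun j => ?_) j
        · intro _; omega
        · refine Fin.cases ?_ (fun j => ?_) j
          · intro hc; exact absurd rfl hc
          · intro _; exact (hneg j).le
      · intro j
        rw [q's]
        refine Fin.cases ?_ (fun j => ?_) j
        · intro _; simp
        · intro hj
          rw [consZ_succ]
          exact hoff i j fun hc => hj (by rw [hc])
    · intro a
      refine Fin.cases Relation.ReflTransGen.refl (fun a => ?_) a
      have h1 : Relation.ReflTransGen (fun a b : Fin (n+1+1) =>
          ∃ i, a = i.succ ∧ q' i b < 0) a.succ (Fin.succ 0) := by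
        have h0 := hreach a
        induction h0 using Relation.ReflTransGen.head_induction_on with
        | refl => exact Relation.ReflTransGen.refl
        | head hab _ ih2 =>
          obtain ⟨i, rfl, hi⟩ := hab
          exact Relation.ReflTransGen.head ⟨i.succ, rfl, by rw [q's]; exact hi⟩ ih2
      refine h1.tail ⟨0, rfl, ?_⟩
      rw [q'0, hh'0]; omega
    · intro j
      refine Fin.cases hroot0 (fun j => ?_) j
      have : (d * e) • root j.succ = (d * e) • root (0 : Fin (n+1)) + e • consZ _ (d • root j) := by
        ext i
        refine Fin.cases ?_ (fun i => ?_) i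
        · simp [root_zero]
        · refine Fin.cases ?_ (fun i => ?_) i
          · simp only [Pi.add_apply, Pi.smul_apply, consZ_succ, root_succ, root_zero, smul_eq_mul,
              (Fin.succ_ne_zero _).symm, if_true, if_false]
            ring
          · simp [root_succ]
            split_ifs <;> ring
      rw [this]
      exact add_mem hroot0 (nsmul_mem_cone _ (hup _ (hcone j)) he.le)

lemma exists_mul_mem (n : ℕ) (L : Submodule ℤ (Fin (n+1) → ℤ))
    (hLsub : ∀ x ∈ L, ∑ i, x i = 0) (hrank : Module.finrank ℤ L = n)
    (x : Fin (n+1) → ℤ) (hx : ∑ i, x i = 0) : ∃ d : ℤ, 0 < d ∧ d • x ∈ L := by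
  let f : (Fin (n+1) → ℤ) →ₗ[ℤ] ℤ := ∑ i, LinearMap.proj i
  have hf : ∀ y, f y = ∑ i, y i := fun y => by simp [f]
  have hsurj : Function.Surjective f := fun z => ⟨Pi.single 0 z, by simp [hf]⟩
  have hker : Module.finrank ℤ (LinearMap.ker f) = n := by
    have h1 := Submodule.finrank_quotient_add_finrank (LinearMap.ker f)
    rw [(f.quotKerEquivOfSurjective hsurj).finrank_eq] at h1
    simp at h1
    omega
  have hle : L ≤ LinearMap.ker f := fun y hy => by
    rw [LinearMap.mem_ker, hf]; exact hLsub y hy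
  have h2 := Submodule.finrank_quotient_add_finrank (L.comap (LinearMap.ker f).subtype)
  rw [(Submodule.comapSubtypeEquivOfLe hle).finrank_eq, hker, hrank] at h2
  have h3 : Module.finrank ℤ (LinearMap.ker f ⧸ L.comap (LinearMap.ker f).subtype) = 0 := by omega
  rw [Module.finrank_eq_zero_iff] at h3
  have hxk : x ∈ LinearMap.ker f := by rw [LinearMap.mem_ker, hf]; exact hx
  obtain ⟨a, ha, hax⟩ := h3 (Submodule.Quotient.mk ⟨x, hxk⟩)
  rw [← Submodule.Quotient.mk_smul, Submodule.Quotient.mk_eq_zero] at hax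
  have hax' : a • x ∈ L := hax
  rcases lt_or_gt_of_ne ha with h | h
  · exact ⟨-a, by omega, by rw [neg_smul]; exact L.neg_mem hax'⟩
  · exact ⟨a, h, hax'⟩

theorem stmt4 (n : ℕ) (hn : 1 ≤ n)
    (L : Submodule ℤ (Fin (n+1) → ℤ))
    (hLsub : ∀ x ∈ L, ∑ i, x i = 0)
    (hrank : Module.finrank ℤ L = n) :
    ∃ A : Matrix (Fin (n+1)) (Fin (n+1)) ℕ,
      (∀ i, A i i = 0) ∧ StronglyConnected A ∧
      ∃ sig : Fin (n+1) → ℤ, (∀ i, 0 < sig i) ∧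
        Matrix.vecMul sig (lap A) = 0 ∧
        sig 0 = 1 ∧
        Finset.univ.gcd sig = 1 ∧
        Submodule.span ℤ (Set.range (fun i => lap A i)) = L := by
  obtain ⟨q, hspan, hoff, hreach, d, hd, hcone⟩ :=
    main_lemma n L hLsub (exists_mul_mem n L hLsub hrank)
  set K : Fin n → ℤ := fun j => |∑ i, q i j.succ| + 1 with hK
  set w : Fin (n+1) → ℤ := ∑ j, K j • (d • root j) with hw
  have hKpos : ∀ j, 0 < K j := fun j => by
    have := abs_nonneg (∑ i, q i j.succ)
    simp only [hK]; omega
  have hwc : w ∈ Submodule.span ℕ (Set.range q) :=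
    sum_mem fun j _ => nsmul_mem_cone _ (hcone j) (hKpos j).le
  obtain ⟨c, hc⟩ := (Submodule.mem_span_range_iff_exists_fun ℕ).mp hwc
  set y : Fin (n+1) → ℤ := ∑ i, (1 + (c i : ℤ)) • q i with hy
  have hyw : y = ∑ i, q i + w := by
    rw [hy, ← hc, ← Finset.sum_add_distrib]
    refine Finset.sum_congr rfl fun i _ => ?_
    rw [add_smul, one_smul, natCast_zsmul]
  have hypos : ∀ j : Fin n, 0 < y j.succ := by
    intro j
    rw [hyw, hw]
    simp only [Pi.add_apply, Finset.sum_apply, Pi.smul_apply, root_succ, smul_eq_mul]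
    simp only [mul_ite, mul_one, mul_zero, Finset.sum_ite_eq, Finset.mem_univ, if_true]
    have := neg_abs_le (∑ i, q i j.succ)
    have := abs_nonneg (∑ i, q i j.succ)
    simp only [hK]
    nlinarith
  have hqL : ∀ i, q i ∈ L := fun i => hspan ▸ Submodule.subset_span ⟨i, rfl⟩
  have hyL : y ∈ L := L.sum_mem fun i _ => L.smul_mem _ (hqL i)
  let R : Matrix (Fin (n+1)) (Fin (n+1)) ℤ := Fin.cons (-y) q
  have R0 : R 0 = -y := rfl
  have Rs : ∀ i : Fin n, R i.succ = q i := fun i => rfl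
  have hRL : ∀ i, R i ∈ L := fun i => Fin.cases (L.neg_mem hyL) hqL i
  have hRo : ∀ i j, i ≠ j → R i j ≤ 0 := by
    intro i
    refine Fin.cases ?_ (fun i => ?_) i
    · intro j
      refine Fin.cases (fun hc => absurd rfl hc) (fun j _ => ?_) j
      rw [R0, Pi.neg_apply]
      have := hypos j
      omega
    · intro j hj
      rw [Rs]
      exact hoff i j hj.symm
  have hlap : lap (adjOf R) = R := lap_adjOf R (fun i => hLsub _ (hRL i)) hRo
  have hAe : ∀ i j, i ≠ j → R i j < 0 → 0 < adjOf R i j := by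
    intro i j hij hlt
    simp only [adjOf, hij, if_false]
    omega
  refine ⟨adjOf R, fun i => by simp [adjOf], ?_, Fin.cons 1 (fun i => 1 + (c i : ℤ)), ?_, ?_, rfl,
    ?_, ?_⟩
  · have hto0 : ∀ a, Relation.ReflTransGen (fun a b => 0 < adjOf R a b) a 0 := by
      intro a
      have := hreach a
      induction this using Relation.ReflTransGen.head_induction_on with
      | refl => exact Relation.ReflTransGen.refl
      | head hab hbc ih =>
        rename_i a' b'
        obtain ⟨i, rfl, hi⟩ := hab
        by_cases hne : i.succ = b'
        · rw [hne]; exact ih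
        · exact Relation.ReflTransGen.head (hAe _ _ hne hi) ih
    have hfrom0 : ∀ j : Fin n, 0 < adjOf R 0 j.succ := by
      intro j
      refine hAe _ _ (Fin.succ_ne_zero j).symm ?_
      rw [R0, Pi.neg_apply]
      have := hypos j
      omega
    intro i j hij
    have hR : Relation.ReflTransGen (fun a b => 0 < adjOf R a b) i j := by
      refine (hto0 i).trans ?_
      refine Fin.cases Relation.ReflTransGen.refl (fun j => ?_) j
      exact Relation.ReflTransGen.single (hfrom0 j)
    rcases Relation.reflTransGen_iff_eq_or_transGen.mp hR with h | h
    · exact absurd h.symm hij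
    · exact h
  · intro i
    refine Fin.cases ?_ (fun i => ?_) i
    · simp
    · rw [Fin.cons_succ]; positivity
  · rw [hlap]
    ext j
    rw [Matrix.vecMul, dotProduct, Fin.sum_univ_succ]
    simp only [Fin.cons_zero, Fin.cons_succ, R0, Rs, Pi.neg_apply]
    rw [hy]
    simp
  · have h1 : Finset.univ.gcd (Fin.cons 1 (fun i => 1 + (c i : ℤ)) : Fin (n+1) → ℤ) ∣ 1 :=
      Finset.gcd_dvd (f := (Fin.cons 1 (fun i => 1 + (c i : ℤ)) : Fin (n+1) → ℤ))
        (Finset.mem_univ 0)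
    rw [← Finset.normalize_gcd]
    exact normalize_eq_one.mpr (isUnit_of_dvd_one h1)
  · rw [hlap]
    apply le_antisymm
    · rw [Submodule.span_le]
      rintro _ ⟨i, rfl⟩
      exact hRL i
    · rw [← hspan, Submodule.span_le]
      rintro _ ⟨i, rfl⟩
      exact Submodule.subset_span ⟨i.succ, rfl⟩
end

section
/- Let n ≥ 1, let A : Matrix (Fin (n+1)) (Fin (n+1)) ℕ with zero diagonal be the adjacency matrix of a strongly connected directed multigraph with Laplacian Q = D − A, and let Σ : Fin (n+1) → ℤ be a strictly positive vector with Matrix.vecMul Σ Q = 0 whose entries have gcd 1. Let C : Fin (n+1) → ℤ satisfy C i ≥ 0 for all i ≠ 0. Then there is no infinite sequence f : ℕ → (Fin (n+1) → ℤ) such that for every m : (a) f m ≠ 0; (b) 0 ≤ f m i ≤ Σ i for all i; (c) f m 0 = 0; and (d) for every i ≠ 0, C i − (Matrix.vecMul (∑_{j ≤ m} f j) Q) i ≥ 0. In other words, every sequence of firings satisfying these conditions is finite. -/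
open Matrix

theorem lap_apply' {n : ℕ} (A : Matrix (Fin (n+1)) (Fin (n+1)) ℕ) (x : Fin (n+1) → ℤ)
    (i : Fin (n+1)) : Matrix.vecMul x (lap A) i
      = x i * (∑ j, (A i j : ℤ)) - ∑ j, x j * (A j i : ℤ) := by
  rw [lap, Matrix.vecMul_sub, Pi.sub_apply, Matrix.vecMul_diagonal]
  simp [Matrix.vecMul, dotProduct]

theorem lap_sum' {n : ℕ} (A : Matrix (Fin (n+1)) (Fin (n+1)) ℕ) (x : Fin (n+1) → ℤ) :
    ∑ i, Matrix.vecMul x (lap A) i = 0 := by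
  simp only [lap_apply', Finset.sum_sub_distrib, Finset.mul_sum]
  rw [sub_eq_zero]
  exact Finset.sum_comm

theorem stmt5 (n : ℕ) (hn : 1 ≤ n) (A : Matrix (Fin (n+1)) (Fin (n+1)) ℕ)
    (hdiag : ∀ i, A i i = 0) (hsc : StronglyConnected A)
    (sig : Fin (n+1) → ℤ) (hpos : ∀ i, 0 < sig i)
    (hker : Matrix.vecMul sig (lap A) = 0)
    (hgcd : Finset.univ.gcd sig = 1)
    (C : Fin (n+1) → ℤ) (hC : ∀ i, i ≠ 0 → 0 ≤ C i) :
    ¬ ∃ f : ℕ → (Fin (n+1) → ℤ), ∀ m : ℕ,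
        f m ≠ 0 ∧
        (∀ i, 0 ≤ f m i ∧ f m i ≤ sig i) ∧
        f m 0 = 0 ∧
        (∀ i, i ≠ 0 →
          0 ≤ C i - Matrix.vecMul (∑ j ∈ Finset.range (m+1), f j) (lap A) i) := by
  rintro ⟨f, hf⟩
  obtain ⟨F, hF⟩ : ∃ F : ℕ → Fin (n+1) → ℤ, ∀ m, F m = ∑ j ∈ Finset.range (m+1), f j :=
    ⟨_, fun _ => rfl⟩
  have hF0 : ∀ m, F m 0 = 0 := by
    intro m
    rw [hF, Finset.sum_apply]
    exact Finset.sum_eq_zero fun j _ => (hf j).2.2.1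
  have hFn : ∀ m i, 0 ≤ F m i := by
    intro m i
    rw [hF, Finset.sum_apply]
    exact Finset.sum_nonneg fun j _ => ((hf j).2.1 i).1
  have hc : ∀ m i, i ≠ 0 → 0 ≤ C i - Matrix.vecMul (F m) (lap A) i := by
    intro m i hi
    rw [hF]
    exact (hf m).2.2.2 i hi
  have hup : ∀ m i, C i - Matrix.vecMul (F m) (lap A) i ≤ ∑ k, C k + |C 0| := by
    intro m i
    let g : Fin (n+1) → ℤ := fun k => if k = 0 then |C 0| else 0
    have hg : ∀ k, 0 ≤ g k := by
      intro k
      simp only [g]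
      split_ifs <;> simp
    have h1 : ∀ k ∈ Finset.univ, 0 ≤ (C k - Matrix.vecMul (F m) (lap A) k) + g k := by
      intro k _
      by_cases hk : k = 0
      · subst hk
        have h2 : 0 ≤ ∑ j, F m j * (A j 0 : ℤ) :=
          Finset.sum_nonneg fun j _ => mul_nonneg (hFn m j) (by positivity)
        have h3 : g 0 = |C 0| := by simp [g]
        rw [lap_apply', hF0, h3]
        have := neg_abs_le (C 0)
        linarith
      · exact add_nonneg (hc m k hk) (hg k)
    have h2 := Finset.single_le_sum h1 (Finset.mem_univ i)
    have h3 : ∑ k, g k = |C 0| := by simp [g]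
    rw [Finset.sum_add_distrib, Finset.sum_sub_distrib, lap_sum', h3] at h2
    have := hg i
    linarith
  have hstep : ∀ j i, 0 < A j i → (∃ B, ∀ m, F m i ≤ B) → ∃ B, ∀ m, F m j ≤ B := by
    rintro j i hA ⟨B, hB⟩
    refine ⟨∑ k, C k + |C 0| - C i + B * ∑ k, (A i k : ℤ), fun m => ?_⟩
    have h1 := hup m i
    rw [lap_apply'] at h1
    have h2 : F m j * (A j i : ℤ) ≤ ∑ j, F m j * (A j i : ℤ) :=
      Finset.single_le_sum (f := fun j => F m j * (A j i : ℤ))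
        (fun j _ => mul_nonneg (hFn m j) (by positivity)) (Finset.mem_univ j)
    have h3 : F m i * ∑ k, (A i k : ℤ) ≤ B * ∑ k, (A i k : ℤ) :=
      mul_le_mul_of_nonneg_right (hB m) (by positivity)
    have h4 : F m j ≤ F m j * (A j i : ℤ) :=
      le_mul_of_one_le_right (hFn m j) (by exact_mod_cast hA)
    linarith
  have hb0 : ∃ B, ∀ m, F m 0 ≤ B := ⟨0, fun m => (hF0 m).le⟩
  have hb : ∀ i, ∃ B, ∀ m, F m i ≤ B := by
    intro i
    by_cases hi : i = 0
    · rw [hi]; exact hb0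
    · have h := hsc i 0 hi
      induction h using Relation.TransGen.head_induction_on with
      | single h => exact hstep _ _ h hb0
      | head h _ ih =>
        rename_i a c _
        by_cases hcz : c = 0
        · subst hcz; exact hstep _ _ h hb0
        · exact hstep _ _ h (ih hcz)
  choose B hB using hb
  have hone : ∀ j, 1 ≤ ∑ i, f j i := by
    intro j
    obtain ⟨i, hi⟩ := Function.ne_iff.mp (hf j).1
    have h1 : f j i ≤ ∑ i, f j i :=
      Finset.single_le_sum (fun i _ => ((hf j).2.1 i).1) (Finset.mem_univ i)
    have h2 := ((hf j).2.1 i).1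
    have h3 : f j i ≠ 0 := hi
    omega
  have hlow : ∀ m : ℕ, (m : ℤ) + 1 ≤ ∑ i, F m i := by
    intro m
    simp only [hF, Finset.sum_apply]
    rw [Finset.sum_comm]
    have := Finset.card_nsmul_le_sum (Finset.range (m+1)) (fun j => ∑ i, f j i) 1
      (fun j _ => hone j)
    simpa using this
  have h1 := hlow (∑ i, B i).toNat
  have h2 : ∑ i, F (∑ i, B i).toNat i ≤ ∑ i, B i := Finset.sum_le_sum fun i _ => hB i _
  have h3 := Int.self_le_toNat (∑ i, B i)
  linarith
end

section
/- Let K be a field, n ≥ 1, let A : Matrix (Fin (n+1)) (Fin (n+1)) ℕ with zero diagonal be the adjacency matrix of a strongly connected directed multigraph with Laplacian Q = D − A, and let Σ : Fin (n+1) → ℤ be a strictly positive vector with Matrix.vecMul Σ Q = 0, gcd of entries 1, and Σ 0 = 1. Let L be the ℤ-span of the rows of Q. Then the lattice ideal I_L in K[x_0,…,x_n] is equal to the ideal generated by the binomials x^{u⁺} − x^{u⁻}, where u = Matrix.vecMul x Q ranges over all vectors obtained from x : Fin (n+1) → ℤ with 0 ≤ x i ≤ Σ i for all i. -/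
open Matrix MvPolynomial

/-- The lattice ideal of a set `L ⊆ ℤ^{n+1}`: the ideal of `K[x_0,…,x_n]` generated by
all binomials `x^u - x^v` with `u, v ∈ ℕ^{n+1}` and `u - v ∈ L`. -/
noncomputable def latticeIdeal (K : Type*) [Field K] (n : ℕ)
    (L : Set (Fin (n+1) → ℤ)) : Ideal (MvPolynomial (Fin (n+1)) K) :=
  Ideal.span {p | ∃ u v : Fin (n+1) → ℕ,
    (fun i => (u i : ℤ) - (v i : ℤ)) ∈ L ∧
    p = (∏ i, X i ^ u i) - (∏ i, X i ^ v i)}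

theorem aux_mono {n : ℕ} (A : Matrix (Fin (n+1)) (Fin (n+1)) ℕ) (x z : Fin (n+1) → ℤ)
    (i : Fin (n+1)) (h : ∀ j, z j ≤ x j) (hi : x i = z i) :
    Matrix.vecMul x (lap A) i ≤ Matrix.vecMul z (lap A) i := by
  simp only [Matrix.vecMul, dotProduct]
  apply Finset.sum_le_sum
  intro j _
  by_cases hj : j = i
  · subst hj
    rw [hi]
  · have hq : lap A j i ≤ 0 := by
      simp [lap, Matrix.diagonal_apply_ne _ hj]
    nlinarith [h j]

theorem aux_step {K : Type*} [Field K] {n : ℕ} (w : Fin (n+1) → ℤ) (u v : Fin (n+1) → ℕ)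
    (h : ∀ i, (u i : ℤ) - v i = w i) :
    ((∏ i, X i ^ u i) - (∏ i, X i ^ v i) : MvPolynomial (Fin (n+1)) K)
      = (∏ i, X i ^ (u i - (w i).toNat)) *
        ((∏ i, X i ^ (w i).toNat) - (∏ i, X i ^ (-(w i)).toNat)) := by
  rw [mul_sub, ← Finset.prod_mul_distrib, ← Finset.prod_mul_distrib]
  congr 1
  · apply Finset.prod_congr rfl
    intro i _
    rw [← pow_add]
    congr 1
    have := h i
    omega
  · apply Finset.prod_congr rfl
    intro i _
    rw [← pow_add]
    congr 1
    have := h i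
    omega

theorem aux_main {K : Type*} [Field K] {n : ℕ}
    (A : Matrix (Fin (n+1)) (Fin (n+1)) ℕ)
    (sig : Fin (n+1) → ℤ) (hpos : ∀ i, 0 < sig i)
    (hker : Matrix.vecMul sig (lap A) = 0) (J : Ideal (MvPolynomial (Fin (n+1)) K))
    (hJ : ∀ x : Fin (n+1) → ℤ, (∀ i, 0 ≤ x i ∧ x i ≤ sig i) →
      (∏ i, X i ^ (Matrix.vecMul x (lap A) i).toNat)
              - (∏ i, X i ^ (-(Matrix.vecMul x (lap A) i)).toNat) ∈ J) (k : ℕ) :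
    ∀ (u v : Fin (n+1) → ℕ) (y : Fin (n+1) → ℤ), (∀ i, 0 ≤ y i ∧ y i ≤ k * sig i) →
      (∀ i, (u i : ℤ) - v i = Matrix.vecMul y (lap A) i) →
      (∏ i, X i ^ u i) - (∏ i, X i ^ v i) ∈ J := by
  induction k with
  | zero =>
    intro u v y hy huv
    have hy0 : y = 0 := by
      funext i
      have := hy i
      simp at this
      simp; omega
    have : u = v := by
      funext i
      have := huv i
      simp [hy0] at this
      omega
    simp [this]
  | succ k ih =>
    intro u v y hy huv
    set z : Fin (n+1) → ℤ := y - (k : ℤ) • sig with hz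
    have hzi : ∀ i, z i = y i - k * sig i := fun i => by simp [hz]
    have hzQ : Matrix.vecMul z (lap A) = Matrix.vecMul y (lap A) := by
      rw [hz, Matrix.sub_vecMul, Matrix.smul_vecMul, hker]; simp
    set x : Fin (n+1) → ℤ := fun i => max (z i) 0 with hx
    have hxb : ∀ i, 0 ≤ x i ∧ x i ≤ sig i := by
      intro i
      have h1 := (hy i).2
      have h2 := hpos i
      have h3 := hzi i
      push_cast at h1
      refine ⟨le_max_right _ _, max_le ?_ h2.le⟩
      linarith
    have hle : ∀ i, Matrix.vecMul x (lap A) i ≤ u i := by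
      intro i
      rcases le_total (z i) 0 with h | h
      · have := aux_mono A x 0 i (fun j => le_max_right _ _) (max_eq_right h)
        simp at this
        omega
      · have := aux_mono A x z i (fun j => le_max_left _ _) (max_eq_left h)
        rw [hzQ, ← huv i] at this
        omega
    set u' : Fin (n+1) → ℕ := fun i => (u i - Matrix.vecMul x (lap A) i).toNat with hu'
    have hu'i : ∀ i, (u' i : ℤ) = u i - Matrix.vecMul x (lap A) i := fun i =>
      Int.toNat_of_nonneg (sub_nonneg.2 (hle i))
    have e1 : (∏ i, X i ^ u i) - (∏ i, X i ^ u' i) ∈ J := by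
      rw [aux_step (Matrix.vecMul x (lap A)) u u' (fun i => by rw [hu'i]; ring)]
      exact J.mul_mem_left _ (hJ x hxb)
    have e2 : (∏ i, X i ^ u' i) - (∏ i, X i ^ v i) ∈ J := by
      apply ih u' v (y - x)
      · intro i
        have h3 := hzi i
        have h4 := hy i
        have h5 : (0 : ℤ) ≤ k * sig i := mul_nonneg (by positivity) (hpos i).le
        simp only [Pi.sub_apply, hx]
        constructor
        · have : max (z i) 0 ≤ y i := max_le (by linarith) h4.1
          linarith
        · have := le_max_left (z i) 0
          linarith
      · intro i
        rw [hu'i, Matrix.sub_vecMul, Pi.sub_apply, ← huv i]; ring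
    simpa using J.add_mem e1 e2

theorem stmt7 (K : Type*) [Field K] (n : ℕ) (hn : 1 ≤ n)
    (A : Matrix (Fin (n+1)) (Fin (n+1)) ℕ)
    (hdiag : ∀ i, A i i = 0) (hsc : StronglyConnected A)
    (sig : Fin (n+1) → ℤ) (hpos : ∀ i, 0 < sig i)
    (hker : Matrix.vecMul sig (lap A) = 0)
    (hgcd : Finset.univ.gcd sig = 1)
    (hsig0 : sig 0 = 1) :
    latticeIdeal K n (Submodule.span ℤ (Set.range (fun i => lap A i)) : Set (Fin (n+1) → ℤ))
      = Ideal.span {p : MvPolynomial (Fin (n+1)) K | ∃ x : Fin (n+1) → ℤ,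
          (∀ i, 0 ≤ x i ∧ x i ≤ sig i) ∧
          p = (∏ i, X i ^ (Matrix.vecMul x (lap A) i).toNat)
              - (∏ i, X i ^ (-(Matrix.vecMul x (lap A) i)).toNat)} := by
  apply le_antisymm
  · apply Ideal.span_le.2
    rintro p ⟨u, v, huv, rfl⟩
    obtain ⟨y, hy⟩ := (Submodule.mem_span_range_iff_exists_fun ℤ).1 huv
    have hyQ : Matrix.vecMul y (lap A) = fun i => (u i : ℤ) - (v i : ℤ) := by
      rw [← hy, Matrix.vecMul_eq_sum]
    -- shift by a multiple of `sig`
    set M : ℕ := ∑ i, (y i).natAbs with hM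
    have hMi : ∀ i, |y i| ≤ M := by
      intro i
      rw [Int.abs_eq_natAbs]
      exact_mod_cast Finset.single_le_sum (f := fun i => (y i).natAbs)
        (fun _ _ => Nat.zero_le _) (Finset.mem_univ i)
    apply aux_main A sig hpos hker _ _ (2 * M) u v (y + (M : ℤ) • sig)
    · intro i
      have h1 := abs_le.1 (hMi i)
      have h2 : (M : ℤ) ≤ M * sig i := le_mul_of_one_le_right (by positivity) (hpos i)
      simp only [Pi.add_apply, Pi.smul_apply, smul_eq_mul]
      push_cast
      constructor <;> linarith
    · intro i
      rw [Matrix.add_vecMul, Matrix.smul_vecMul, hker, hyQ]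
      simp
    · intro x hx
      exact Ideal.subset_span ⟨x, hx, rfl⟩
  · apply Ideal.span_le.2
    rintro p ⟨x, hx, rfl⟩
    refine Ideal.subset_span ⟨_, _, ?_, rfl⟩
    refine (Submodule.mem_span_range_iff_exists_fun ℤ).2 ⟨x, ?_⟩
    rw [← Matrix.vecMul_eq_sum]
    funext i
    omega
end

section
/- Let K be a field and k ≥ 1 a natural number. Let I_k be the ideal of K[x_0, x_1, x_2, x_3] generated by the three binomials x_0^k x_2 x_3 − x_1^{k+2}, x_0 x_1^k x_3 − x_2^{k+2}, and x_0 x_1 x_2^k − x_3^{k+2}. Then the binomial x_1^2 x_2^{k+1} − x_0^{k+1} x_3^2 lies in the saturation of I_k with respect to the product of the variables: there exists e : ℕ such that (x_0 x_1 x_2 x_3)^e · (x_1^2 x_2^{k+1} − x_0^{k+1} x_3^2) ∈ I_k. -/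
open MvPolynomial

/-- The ideal `I_k` of `K[x_0,x_1,x_2,x_3]` generated by the deformed binomials
`x_0^k x_2 x_3 − x_1^{k+2}`, `x_0 x_1^k x_3 − x_2^{k+2}`, `x_0 x_1 x_2^k − x_3^{k+2}`. -/
noncomputable def Ik (K : Type*) [Field K] (k : ℕ) : Ideal (MvPolynomial (Fin 4) K) :=
  Ideal.span {X 0 ^ k * X 2 * X 3 - X 1 ^ (k+2),
              X 0 * X 1 ^ k * X 3 - X 2 ^ (k+2),
              X 0 * X 1 * X 2 ^ k - X 3 ^ (k+2)}

theorem stmt8 (K : Type*) [Field K] (k : ℕ) (hk : 1 ≤ k) :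
    ∃ e : ℕ, (X 0 * X 1 * X 2 * X 3 : MvPolynomial (Fin 4) K) ^ e *
      (X 1 ^ 2 * X 2 ^ (k+1) - X 0 ^ (k+1) * X 3 ^ 2) ∈ Ik K k := by
  refine ⟨k + 1, ?_⟩
  have h1 : (X 0 ^ k * X 2 * X 3 - X 1 ^ (k+2) : MvPolynomial (Fin 4) K) ∈ Ik K k :=
    Ideal.subset_span (by simp)
  have h2 : (X 0 * X 1 ^ k * X 3 - X 2 ^ (k+2) : MvPolynomial (Fin 4) K) ∈ Ik K k :=
    Ideal.subset_span (by simp)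
  have h3 := (Ik K k).mul_mem_left (-(X 1 * X 0 ^ (k+1) * X 2 ^ k * X 3 ^ (k+1)))
    ((Ik K k).add_mem ((Ik K k).mul_mem_left (X 0 * X 1 ^ k * X 3) h1)
      ((Ik K k).mul_mem_left (X 1 ^ (k+2)) h2))
  convert h3 using 1
  ring
end

section
/- Let K be a field and k ≥ 1 a natural number. Let I_k be the ideal of K[x_0, x_1, x_2, x_3] generated by the three binomials x_0^k x_2 x_3 − x_1^{k+2}, x_0 x_1^k x_3 − x_2^{k+2}, and x_0 x_1 x_2^k − x_3^{k+2}. Then the binomial x_1^2 x_2^{k+1} − x_0^{k+1} x_3^2 does not belong to I_k. -/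
open MvPolynomial

theorem stmt9 (K : Type*) [Field K] (k : ℕ) (hk : 1 ≤ k) :
    (X 1 ^ 2 * X 2 ^ (k+1) - X 0 ^ (k+1) * X 3 ^ 2 : MvPolynomial (Fin 4) K) ∉ Ik K k := by
  intro h
  let m : Fin 4 →₀ ℕ := Finsupp.single 1 2 + Finsupp.single 2 (k+1)
  let S : Set (Fin 4 →₀ ℕ) := {s | ¬ s ≤ m}
  let J : Ideal (MvPolynomial (Fin 4) K) := Ideal.span ((fun s => monomial s (1 : K)) '' S)
  have hmon : ∀ (a b c d : ℕ), (0 < a ∨ 2 < b ∨ k + 1 < c ∨ 0 < d) →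
      (X 0 ^ a * X 1 ^ b * X 2 ^ c * X 3 ^ d : MvPolynomial (Fin 4) K) ∈ J := by
    intro a b c d hh
    apply Ideal.subset_span
    refine ⟨Finsupp.single 0 a + Finsupp.single 1 b + Finsupp.single 2 c + Finsupp.single 3 d,
      ?_, ?_⟩
    · intro hle
      have h0 := hle 0
      have h1 := hle 1
      have h2 := hle 2
      have h3 := hle 3
      simp [m, Finsupp.single_apply] at h0 h1 h2 h3
      omega
    · simp [X_pow_eq_monomial, monomial_mul]
  have hJ : Ik K k ≤ J := by
    unfold Ik
    rw [Ideal.span_le]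
    rintro p (rfl | rfl | rfl)
    · have h1 := hmon k 0 1 1 (by omega)
      have h2 := hmon 0 (k+2) 0 0 (by omega)
      simpa using J.sub_mem h1 h2
    · have h1 := hmon 1 k 0 1 (by omega)
      have h2 := hmon 0 0 (k+2) 0 (by omega)
      simpa using J.sub_mem h1 h2
    · have h1 := hmon 1 1 k 0 (by omega)
      have h2 := hmon 0 0 0 (k+2) (by omega)
      simpa using J.sub_mem h1 h2
  have h4 := hmon (k+1) 0 0 2 (by omega)
  have h5 : (monomial m (1 : K)) ∈ J := by
    have := J.add_mem (hJ h) h4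
    simpa [m, X_pow_eq_monomial, monomial_mul] using this
  have h6 := mem_ideal_span_monomial_image.1 h5 m (by simp)
  obtain ⟨s, hs, hle⟩ := h6
  exact hs hle
end

section
/- Let K be a field, n ≥ 1, and let Σ : Fin (n+1) → ℤ be strictly positive with gcd of entries 1. Let C_Σ be the set of real matrices Q : Matrix (Fin (n+1)) (Fin (n+1)) ℝ such that every row sum of Q is zero, Q i j ≤ 0 for all i ≠ j, Matrix.vecMul (fun i => (Σ i : ℝ)) Q = 0, and the support digraph of Q (with an edge from i to j iff i ≠ j and Q i j < 0) is strongly connected. Then the following subset is dense in C_Σ (for the topology induced by any matrix norm on ℝ^{(n+1)×(n+1)}): the set of Q ∈ C_Σ with rational entries for which there exists a nonzero natural number λ such that λ·Q has integer entries and the lattice ideal in K[x_0,…,x_n] of the ℤ-span of the rows of λ·Q is generic. -/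
open Matrix MvPolynomial

/-- A lattice ideal is generic if it is generated by binomials `x^{u⁺} - x^{u⁻}` where
the vectors `u ∈ L` have full support. -/
def IsGenericLatticeIdeal (K : Type*) [Field K] (n : ℕ)
    (L : Set (Fin (n+1) → ℤ)) : Prop :=
  ∃ S : Finset (Fin (n+1) → ℤ), (↑S : Set (Fin (n+1) → ℤ)) ⊆ L ∧
    (∀ u ∈ S, ∀ i, u i ≠ 0) ∧
    latticeIdeal K n L =
      Ideal.span ((fun u : Fin (n+1) → ℤ =>
        (∏ i, X i ^ (u i).toNat) - (∏ i, X i ^ (-(u i)).toNat) :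
          (Fin (n+1) → ℤ) → MvPolynomial (Fin (n+1)) K) '' ↑S)

/-- The cone `C_Σ` of Laplacians of real edge-weighted strongly connected directed
graphs with left kernel containing `Σ`. -/
def coneCSig (n : ℕ) (sig : Fin (n+1) → ℤ) : Set (Matrix (Fin (n+1)) (Fin (n+1)) ℝ) :=
  {Q | (∀ i, ∑ j, Q i j = 0) ∧
       (∀ i j, i ≠ j → Q i j ≤ 0) ∧
       Matrix.vecMul (fun i => (sig i : ℝ)) Q = 0 ∧
       (∀ i j, i ≠ j → Relation.TransGen (fun a b => a ≠ b ∧ Q a b < 0) i j)}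


/-- Connectivity argument: binomials reduce by induction on the degree. -/
lemma binom_mem_of_step {K : Type*} [Field K] {n : ℕ}
    (L : Submodule ℤ (Fin (n+1) → ℤ)) (hL : ∀ u ∈ L, ∑ i, u i = 0)
    (J : Ideal (MvPolynomial (Fin (n+1)) K))
    (H : ∀ u v : Fin (n+1) → ℕ, (fun i => (u i : ℤ) - (v i : ℤ)) ∈ L →
      (∀ i, u i = 0 ∨ v i = 0) →
      ((∏ i, X i ^ u i) - (∏ i, X i ^ v i) : MvPolynomial (Fin (n+1)) K) ∈ J ∨
      ∃ w : Fin (n+1) → ℕ, (∀ i, 0 < w i) ∧ (fun i => (u i : ℤ) - (w i : ℤ)) ∈ L) :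
    ∀ d : ℕ, ∀ u v : Fin (n+1) → ℕ, ∑ i, u i = d → (fun i => (u i : ℤ) - (v i : ℤ)) ∈ L →
      ((∏ i, X i ^ u i) - (∏ i, X i ^ v i) : MvPolynomial (Fin (n+1)) K) ∈ J := by
  intro d
  induction d using Nat.strong_induction_on with
  | _ d ih =>
  -- binomials sharing a variable
  have share : ∀ u v : Fin (n+1) → ℕ, ∑ i, u i = d → (fun i => (u i : ℤ) - (v i : ℤ)) ∈ L →
      (∃ k, 0 < u k ∧ 0 < v k) →
      ((∏ i, X i ^ u i) - (∏ i, X i ^ v i) : MvPolynomial (Fin (n+1)) K) ∈ J := by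
    rintro u v hu huv ⟨k, huk, hvk⟩
    have dec : ∀ u : Fin (n+1) → ℕ, 0 < u k → ∃ u' : Fin (n+1) → ℕ,
        u = u' + Pi.single k 1 := by
      intro u hk
      refine ⟨u - Pi.single k 1, ?_⟩
      funext i
      by_cases h : i = k
      · subst h; simp; omega
      · simp [h]
    obtain ⟨u', rfl⟩ := dec u huk
    obtain ⟨v', rfl⟩ := dec v hvk
    have hm : ∀ u' : Fin (n+1) → ℕ,
        (∏ i, X i ^ ((u' + Pi.single k 1 : Fin (n+1) → ℕ) i) : MvPolynomial (Fin (n+1)) K)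
          = X k * ∏ i, X i ^ u' i := by
      intro u'
      simp only [Pi.add_apply, pow_add, Finset.prod_mul_distrib]
      rw [mul_comm]
      congr 1
      rw [Finset.prod_eq_single k]
      · simp
      · intro b _ hb; simp [hb]
      · simp
    rw [hm, hm, ← mul_sub]
    apply Ideal.mul_mem_left
    have hs : ∑ i, u' i + 1 = d := by
      rw [← hu]; simp [Finset.sum_add_distrib]
    refine ih (∑ i, u' i) (by omega) u' v' rfl ?_
    convert huv using 2
    simp
  intro u v hu huv
  by_cases hsh : ∃ k, 0 < u k ∧ 0 < v k
  · exact share u v hu huv hsh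
  have hsum : ∀ u v : Fin (n+1) → ℕ, (fun i => (u i : ℤ) - (v i : ℤ)) ∈ L →
      ∑ i, u i = ∑ i, v i := by
    intro u v h
    have := hL _ h
    rw [Finset.sum_sub_distrib, sub_eq_zero] at this
    exact_mod_cast this
  rcases H u v huv (fun i => by by_contra h; push Not at h; exact hsh ⟨i, by omega, by omega⟩) with h | ⟨w, hw, huw⟩
  · exact h
  by_cases hd : d = 0
  · have h1 : ∀ i, u i = 0 := by
      have : ∑ i, u i = 0 := by omega
      simpa using this
    have h2 : ∀ i, v i = 0 := by
      have : ∑ i, v i = 0 := by rw [← hsum u v huv]; omega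
      simpa using this
    simp [h1, h2]
  have key : ∀ u : Fin (n+1) → ℕ, ∑ i, u i = d → ∃ k, 0 < u k := by
    intro u hu
    by_contra h
    push Not at h
    apply hd
    rw [← hu]
    exact Finset.sum_eq_zero fun i _ => by have := h i; omega
  have e1 : ((∏ i, X i ^ u i) - (∏ i, X i ^ w i) : MvPolynomial (Fin (n+1)) K) ∈ J := by
    obtain ⟨k, hk⟩ := key u hu
    exact share u w hu huw ⟨k, hk, hw k⟩
  have e2 : ((∏ i, X i ^ w i) - (∏ i, X i ^ v i) : MvPolynomial (Fin (n+1)) K) ∈ J := by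
    obtain ⟨k, hk⟩ := key v (by rw [← hsum u v huv, hu])
    refine share w v (by rw [← hsum u w huw, hu]) ?_ ⟨k, hw k, hk⟩
    have := L.sub_mem huv huw
    convert this using 1
    funext i; simp
  have := J.add_mem e1 e2
  simpa using this

/-- thresholds -/
noncomputable def thr (C : ℝ) : ℕ → ℝ
  | 0 => 0
  | k+1 => thr C k + 1 + C * thr C k

lemma thr_nonneg {C : ℝ} (hC : 0 ≤ C) (k : ℕ) : 0 ≤ thr C k := by
  induction k with
  | zero => simp [thr]
  | succ k ih => simp only [thr]; positivity

lemma thr_mono {C : ℝ} (hC : 0 ≤ C) : Monotone (thr C) := by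
  apply monotone_nat_of_le_succ
  intro k
  have := thr_nonneg hC k
  simp only [thr]
  nlinarith [mul_nonneg hC this]

/-- weighted form of a column of `M` -/
lemma col_form {n : ℕ} (sig : Fin (n+1) → ℝ) (hpos : ∀ i, 0 < sig i)
    (M : Matrix (Fin (n+1)) (Fin (n+1)) ℝ) (hM : sig ᵥ* M = 0) (b : Fin (n+1) → ℝ)
    (j : Fin (n+1)) :
    (b ᵥ* M) j = ∑ i, (-(sig i * M i j)) * (b j / sig j - b i / sig i) := by
  have h0 : ∑ i, sig i * M i j = 0 := by
    have := congrFun hM j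
    simpa [Matrix.vecMul, dotProduct] using this
  have h1 : ∀ i, (-(sig i * M i j)) * (b j / sig j - b i / sig i)
      = b i * M i j - (b j / sig j) * (sig i * M i j) := by
    intro i
    have := (hpos i).ne'
    field_simp
    ring
  simp only [h1]
  rw [Finset.sum_sub_distrib, ← Finset.mul_sum, h0]
  simp [Matrix.vecMul, dotProduct]

/-- If the firing script has large spread, fire a well-separated upper set. -/
lemma exists_fire {n : ℕ} (sig : Fin (n+1) → ℝ) (hpos : ∀ i, 0 < sig i) (R : ℝ) (hR : 0 ≤ R)
    (M : Matrix (Fin (n+1)) (Fin (n+1)) ℝ) (hM : sig ᵥ* M = 0)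
    (hneg : ∀ i j, i ≠ j → M i j < 0)
    (hrat : ∀ i k j, i ≠ j → k ≠ j → -(sig i * M i j) ≤ R * -(sig k * M k j))
    (a : Fin (n+1) → ℝ) (i₁ k₁ : Fin (n+1))
    (hspread : thr ((n+1) * R) (n+2) < a i₁ / sig i₁ - a k₁ / sig k₁) :
    ∃ A : Finset (Fin (n+1)), ∀ j,
      ((fun i => if i ∈ A then sig i else 0) ᵥ* M) j < 0 ∨
      0 < ((a - fun i => if i ∈ A then sig i else 0) ᵥ* M) j := by
  set C : ℝ := (n+1) * R with hCdef
  have hC : 0 ≤ C := by positivity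
  obtain ⟨i₀, hi₀⟩ := Finite.exists_max (fun i => a i / sig i)
  set d : Fin (n+1) → ℝ := fun i => a i₀ / sig i₀ - a i / sig i with hd
  -- an empty interval
  have hk : ∃ k, k < n + 2 ∧ ∀ i, d i ≤ thr C k ∨ thr C (k+1) < d i := by
    by_contra hcon
    push Not at hcon
    choose! f hf1 hf2 using hcon
    have hinj : Function.Injective (fun k : Fin (n+2) => f k) := by
      intro k l hkl
      simp only at hkl
      by_contra hne
      have aux : ∀ k l : Fin (n+2), f k = f l → k < l → False := by
        intro k l hkl hlt
        have h1 := hf2 k k.2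
        have h2 := hf1 l l.2
        have h3 : thr C (k+1) ≤ thr C l := thr_mono hC (by exact_mod_cast hlt)
        rw [hkl] at h1
        linarith
      rcases lt_or_gt_of_ne hne with h | h
      · exact aux k l hkl h
      · exact aux l k hkl.symm h
    have := Fintype.card_le_of_injective _ hinj
    simp at this
  obtain ⟨k, hkn, hk⟩ := hk
  have ht0 := thr_nonneg hC k
  classical
  let A : Finset (Fin (n+1)) := Finset.univ.filter (fun i => d i ≤ thr C k)
  have memA : ∀ i, i ∈ A ↔ d i ≤ thr C k := by intro i; simp [A]
  have hi₀A : i₀ ∈ A := by rw [memA]; simp [hd, ht0]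
  have hk₁A : k₁ ∉ A := by
    rw [memA, not_le]
    have h1 := hi₀ i₁
    have h2 : thr C k ≤ thr C (n+2) := thr_mono hC hkn.le
    simp only [hd] at *
    linarith
  have hd0 : ∀ i, 0 ≤ d i := fun i => by simp only [hd]; linarith [hi₀ i]
  refine ⟨A, fun j => ?_⟩
  by_cases hj : j ∈ A
  · right
    rw [col_form sig hpos M hM]
    have hterm : ∀ i, (((a - fun i => if i ∈ A then sig i else 0) : Fin (n+1) → ℝ) j / sig j
        - ((a - fun i => if i ∈ A then sig i else 0) : Fin (n+1) → ℝ) i / sig i)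
        = d i - d j - (if i ∈ A then 0 else 1) := by
      intro i
      have h1 := (hpos i).ne'
      have h2 := (hpos j).ne'
      by_cases hi : i ∈ A
      · simp only [Pi.sub_apply, hj, hi, if_true, hd]; field_simp; ring
      · simp only [Pi.sub_apply, hj, hi, if_true, if_false, hd]; field_simp; ring
    simp only [hterm]
    have hjk : k₁ ≠ j := fun h => hk₁A (h ▸ hj)
    set m : ℝ := -(sig k₁ * M k₁ j) with hm
    have hmpos : 0 < m := by
      have := mul_pos (hpos k₁) (neg_pos.2 (hneg k₁ j hjk)); rw [hm]; linarith
    have hdj := (memA j).1 hj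
    have hdk : thr C (k+1) < d k₁ := (hk k₁).resolve_left (fun h => hk₁A ((memA _).2 h))
    rw [← Finset.add_sum_erase _ _ (Finset.mem_univ k₁)]
    have hlow : -(n * (R * m * thr C k)) ≤ ∑ i ∈ Finset.univ.erase k₁,
        -(sig i * M i j) * (d i - d j - (if i ∈ A then 0 else 1)) := by
      have : ∀ i ∈ Finset.univ.erase k₁, -(R * m * thr C k) ≤ 
        -(sig i * M i j) * (d i - d j - (if i ∈ A then 0 else 1)) := by
        intro i _
        by_cases hij : i = j
        · subst hij
          simp only [hj, if_true, sub_self, mul_zero]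
          have : 0 ≤ R * m * thr C k := by positivity
          linarith
        have hp : 0 < -(sig i * M i j) := by
          have := mul_pos (hpos i) (neg_pos.2 (hneg i j hij)); linarith
        have hle := hrat i k₁ j hij hjk
        by_cases hi : i ∈ A
        · simp only [hi, if_true, sub_zero]
          have : -(thr C k) ≤ d i - d j := by linarith [hd0 i]
          nlinarith [mul_le_mul_of_nonneg_left this hp.le, mul_le_mul_of_nonneg_right hle ht0]
        · simp only [hi, if_false]
          have hdi : thr C (k+1) < d i := (hk i).resolve_left (fun h => hi ((memA _).2 h))
          simp only [thr] at hdi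
          have : 0 ≤ d i - d j - 1 := by nlinarith [mul_nonneg hC ht0]
          have h2 : 0 ≤ R * m * thr C k := by positivity
          have := mul_nonneg hp.le this
          linarith
      have := Finset.card_nsmul_le_sum _ _ _ this
      simpa [Finset.card_erase_of_mem] using this
    have hmain : C * thr C k < d k₁ - d j - 1 := by
      simp only [thr] at hdk; linarith
    have hmm := mul_lt_mul_of_pos_left hmain hmpos
    simp only [hk₁A, if_false]
    have : 0 ≤ R * m * thr C k := by positivity
    rw [hCdef] at hmm
    rw [hCdef] at hlow this
    nlinarith
  · left
    rw [col_form sig hpos M hM]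
    apply Finset.sum_neg'
    · intro i _
      by_cases hij : i = j
      · subst hij; simp
      have hp : 0 < -(sig i * M i j) := by
          have := mul_pos (hpos i) (neg_pos.2 (hneg i j hij)); linarith
      by_cases hi : i ∈ A
      · have h1 := (hpos i).ne'
        simp only [hj, hi, if_true, if_false]
        rw [div_self h1]; simp; linarith
      · simp [hj, hi]
    · refine ⟨i₀, Finset.mem_univ _, ?_⟩
      have hij : i₀ ≠ j := fun h => hj (h ▸ hi₀A)
      have hp : 0 < -(sig i₀ * M i₀ j) := by
          have := mul_pos (hpos i₀) (neg_pos.2 (hneg i₀ j hij)); linarith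
      have h1 := (hpos i₀).ne'
      simp only [hj, hi₀A, if_true, if_false]
      rw [div_self h1]; simp; linarith

/-- normalise a firing script modulo `sig` -/
lemma normalise {n : ℕ} (sig : Fin (n+1) → ℤ) (hpos : ∀ i, 0 < sig i) (a : Fin (n+1) → ℤ) :
    ∃ k : ℤ, (∀ i, 0 ≤ a i - k * sig i) ∧ ∃ i, a i - k * sig i < sig i := by
  obtain ⟨i₀, h⟩ := Finite.exists_min (fun i => a i / sig i)
  refine ⟨a i₀ / sig i₀, fun i => ?_, i₀, ?_⟩
  · have h1 := Int.ediv_mul_le (a i) (hpos i).ne'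
    have h2 := mul_le_mul_of_nonneg_right (h i) (hpos i).le
    linarith
  · have := Int.lt_ediv_add_one_mul_self (a i₀) (hpos i₀)
    linarith

lemma generic_of {K : Type*} [Field K] {n : ℕ} (sig : Fin (n+1) → ℤ) (hpos : ∀ i, 0 < sig i)
    (R : ℝ) (hR : 0 ≤ R) (M : Matrix (Fin (n+1)) (Fin (n+1)) ℤ)
    (hrow : ∀ i, ∑ j, M i j = 0) (hM : sig ᵥ* M = 0)
    (hneg : ∀ i j, i ≠ j → M i j < 0)
    (hrat : ∀ i k j, i ≠ j → k ≠ j →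
      -((sig i : ℝ) * (M i j : ℝ)) ≤ R * -((sig k : ℝ) * (M k j : ℝ)))
    (F : Finset (Fin (n+1) → ℤ))
    (hF : ∀ a : Fin (n+1) → ℤ, (∀ i, 0 ≤ a i) →
      (∀ i, (a i : ℝ) / sig i ≤ 1 + thr ((n+1) * R) (n+2)) → a ∈ F)
    (hnz : ∀ a ∈ F, (∃ i k, a i * sig k ≠ a k * sig i) → ∀ j, (a ᵥ* M) j ≠ 0) :
    IsGenericLatticeIdeal K n
      (Submodule.span ℤ (Set.range (fun i => M i)) : Set (Fin (n+1) → ℤ)) := by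
  classical
  set L := Submodule.span ℤ (Set.range (fun i => M i)) with hLdef
  have memL : ∀ u, u ∈ L ↔ ∃ a : Fin (n+1) → ℤ, a ᵥ* M = u := by
    intro u
    rw [hLdef, Submodule.mem_span_range_iff_exists_fun]
    simp only [Matrix.vecMul_eq_sum]
  have hL : ∀ u ∈ L, ∑ i, u i = 0 := by
    intro u hu
    obtain ⟨a, rfl⟩ := (memL u).1 hu
    simp only [Matrix.vecMul, dotProduct]
    rw [Finset.sum_comm]
    simp [← Finset.mul_sum, hrow]
  refine ⟨(F.image (fun a => a ᵥ* M)).filter (fun u => ∀ i, u i ≠ 0), ?_, ?_, ?_⟩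
  · intro u hu
    simp only [Finset.coe_filter, Finset.mem_image, Set.mem_ofPred_eq] at hu
    obtain ⟨⟨a, _, rfl⟩, _⟩ := hu
    exact (memL _).2 ⟨a, rfl⟩
  · intro u hu
    exact (Finset.mem_filter.1 hu).2
  apply le_antisymm
  · unfold latticeIdeal
    rw [Ideal.span_le]
    rintro p ⟨u, v, huv, rfl⟩
    refine binom_mem_of_step L hL _ ?_ _ u v rfl huv
    clear huv u v
    intro u v huv hdis
    obtain ⟨a₀, ha₀⟩ := (memL _).1 huv
    obtain ⟨k, hk0, i₀, hi₀⟩ := normalise sig hpos a₀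
    obtain ⟨a, ha⟩ : ∃ a : Fin (n+1) → ℤ, a = a₀ - k • sig := ⟨_, rfl⟩
    have hai : ∀ i, a i = a₀ i - k * sig i := by intro i; simp [ha]
    have haM : a ᵥ* M = fun i => (u i : ℤ) - (v i : ℤ) := by
      rw [ha, Matrix.sub_vecMul, Matrix.smul_vecMul, hM, ha₀]; simp
    have ha0 : ∀ i, 0 ≤ a i := fun i => by rw [hai]; exact hk0 i
    have hai₀ : a i₀ < sig i₀ := by rw [hai]; exact hi₀
    have hposR : ∀ i, (0:ℝ) < sig i := fun i => by exact_mod_cast hpos i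
    by_cases hsp : ∃ i, thr ((n+1) * R) (n+2) < (a i : ℝ) / sig i - (a i₀ : ℝ) / sig i₀
    · right
      obtain ⟨i₁, hi₁⟩ := hsp
      have castv : ∀ b : Fin (n+1) → ℤ, ∀ j,
          ((fun i => (b i : ℝ)) ᵥ* M.map (fun x : ℤ => (x : ℝ))) j = (((b ᵥ* M) j : ℤ) : ℝ) := by
        intro b j
        simp [Matrix.vecMul, dotProduct]
      obtain ⟨A, hA⟩ := exists_fire (fun i => (sig i : ℝ)) hposR R hR
        (M.map (fun x : ℤ => (x : ℝ))) (by funext j; rw [castv, hM]; simp)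
        (fun i j hij => by simpa using hneg i j hij)
        (fun i k j h1 h2 => by simpa using hrat i k j h1 h2) (fun i => (a i : ℝ)) i₁ i₀ hi₁
      set b : Fin (n+1) → ℤ := fun i => if i ∈ A then sig i else 0 with hb
      have hbR : (fun i => if i ∈ A then (sig i : ℝ) else 0) = fun i => (b i : ℝ) := by
        funext i; simp [hb]
      have habR : ((fun i => (a i : ℝ)) - fun i => (b i : ℝ)) = fun i => (((a - b) i : ℤ) : ℝ) := by
        funext i; simp
      rw [hbR] at hA
      simp only [habR, castv] at hA
      have hw : ∀ j, 0 < (u j : ℤ) - (b ᵥ* M) j := by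
        intro j
        have h3 := congrFun haM j
        rcases hA j with h | h
        · have : (b ᵥ* M) j < 0 := by exact_mod_cast h
          omega
        · have : 0 < ((a - b) ᵥ* M) j := by exact_mod_cast h
          rw [Matrix.sub_vecMul, Pi.sub_apply] at this
          omega
      refine ⟨fun j => ((u j : ℤ) - (b ᵥ* M) j).toNat, fun j => by
        have := hw j
        simp only
        omega, ?_⟩
      rw [memL]
      refine ⟨b, ?_⟩
      funext j
      have := hw j
      simp only
      omega
    · left
      push Not at hsp
      have haF : a ∈ F := by
        apply hF a ha0
        intro i
        have h1 := hsp i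
        have h2 : (a i₀ : ℝ) / sig i₀ ≤ 1 := by
          rw [div_le_one (hposR _)]
          exact_mod_cast hai₀.le
        linarith
      by_cases hprop : ∃ i k, a i * sig k ≠ a k * sig i
      · apply Ideal.subset_span
        refine ⟨fun i => (u i : ℤ) - (v i : ℤ), ?_, ?_⟩
        · simp only [Finset.coe_filter, Finset.mem_image, Set.mem_ofPred_eq]
          refine ⟨⟨a, haF, haM⟩, fun i => ?_⟩
          have := hnz a haF hprop i
          rw [haM] at this
          exact this
        · simp only
          congr 1
          · apply Finset.prod_congr rfl
            intro i _
            congr 1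
            rcases hdis i with h | h <;> omega
          · apply Finset.prod_congr rfl
            intro i _
            congr 1
            rcases hdis i with h | h <;> omega
      · push Not at hprop
        have hz : sig 0 • (a ᵥ* M) = 0 := by
          have : sig 0 • a = a 0 • sig := by
            funext i
            have := hprop i 0
            simp only [Pi.smul_apply, smul_eq_mul]
            linarith
          rw [← Matrix.smul_vecMul, this, Matrix.smul_vecMul, hM, smul_zero]
        have hz2 : a ᵥ* M = 0 := (smul_eq_zero.1 hz).resolve_left (hpos 0).ne'
        have huv' : u = v := by
          funext i
          have := congrFun (haM.symm.trans hz2) i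
          simp only [Pi.zero_apply] at this
          omega
        rw [huv', sub_self]
        exact Ideal.zero_mem _
  · rw [Ideal.span_le]
    rintro _ ⟨u, hu, rfl⟩
    simp only [Finset.coe_filter, Finset.mem_image, Set.mem_ofPred_eq] at hu
    obtain ⟨⟨a, _, rfl⟩, _⟩ := hu
    apply Ideal.subset_span
    refine ⟨fun i => ((a ᵥ* M) i).toNat, fun i => (-(a ᵥ* M) i).toNat, ?_, rfl⟩
    show _ ∈ L
    rw [memL]
    refine ⟨a, ?_⟩
    funext i
    simp only
    omega

lemma exists_proj {n : ℕ} (sig : Fin (n+1) → ℤ) (hpos : ∀ i, 0 < sig i) :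
    ∃ A B : Matrix (Fin (n+1)) (Fin (n+1)) ℚ,
      (fun i => (sig i : ℝ)) ᵥ* A.map (fun x : ℚ => (x : ℝ)) = 0 ∧
      B.map (fun x : ℚ => (x : ℝ)) *ᵥ 1 = 0 ∧
      ∀ Y : Matrix (Fin (n+1)) (Fin (n+1)) ℝ, (fun i => (sig i : ℝ)) ᵥ* Y = 0 → Y *ᵥ 1 = 0 →
        A.map (fun x : ℚ => (x : ℝ)) * Y * B.map (fun x : ℚ => (x : ℝ)) = Y := by
  set s : ℤ := ∑ i, sig i with hs
  have hspos : 0 < s := Finset.sum_pos (fun i _ => hpos i) Finset.univ_nonempty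
  have hsR : (s : ℝ) ≠ 0 := by exact_mod_cast hspos.ne'
  have hsum : ∑ i, (sig i : ℝ) = s := by simp [hs]
  refine ⟨1 - (s : ℚ)⁻¹ • vecMulVec 1 (fun i => (sig i : ℚ)),
    1 - ((n : ℚ) + 1)⁻¹ • vecMulVec 1 1, ?_⟩
  have hA : (1 - (s : ℚ)⁻¹ • vecMulVec 1 (fun i => (sig i : ℚ)) :
      Matrix (Fin (n+1)) (Fin (n+1)) ℚ).map (fun x : ℚ => (x : ℝ)) =
      1 - (s : ℝ)⁻¹ • vecMulVec 1 (fun i => (sig i : ℝ)) := by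
    ext i j
    by_cases h : i = j <;> simp [Matrix.one_apply, vecMulVec_apply, h]
  have hB : (1 - ((n : ℚ) + 1)⁻¹ • vecMulVec 1 1 :
      Matrix (Fin (n+1)) (Fin (n+1)) ℚ).map (fun x : ℚ => (x : ℝ)) =
      1 - ((n : ℝ) + 1)⁻¹ • vecMulVec 1 1 := by
    ext i j
    by_cases h : i = j <;> simp [Matrix.one_apply, vecMulVec_apply, h]
  rw [hA, hB]
  have hn1 : (n : ℝ) + 1 ≠ 0 := by positivity
  refine ⟨?_, ?_, ?_⟩
  · rw [Matrix.vecMul_sub, Matrix.vecMul_smul, Matrix.vecMul_vecMulVec]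
    funext j
    simp [dotProduct, hsum]
    field_simp
    ring
  · rw [Matrix.sub_mulVec, Matrix.smul_mulVec, Matrix.vecMulVec_mulVec]
    funext j
    simp [dotProduct]
    field_simp
    ring
  · intro Y h1 h2
    have e1 : (1 - (s : ℝ)⁻¹ • vecMulVec 1 (fun i => (sig i : ℝ))) * Y = Y := by
      rw [Matrix.sub_mul, Matrix.smul_mul, Matrix.vecMulVec_mul, h1]
      simp
    rw [e1, Matrix.mul_sub, Matrix.mul_smul, Matrix.mul_vecMulVec, h2]
    simp

lemma dense_ne {V : Type*} [AddCommGroup V] [Module ℝ V] [TopologicalSpace V]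
    [ContinuousAdd V] [ContinuousSMul ℝ V] (l : V →ₗ[ℝ] ℝ) (z : V) (hz : l z ≠ 0) :
    Dense {y | l y ≠ 0} := by
  intro y
  by_cases hy : l y = 0
  · have ht : Filter.Tendsto (fun m : ℕ => y + (1 / ((m : ℝ) + 1)) • z) Filter.atTop (nhds y) := by
      have := (tendsto_one_div_add_atTop_nhds_zero_nat (𝕜 := ℝ)).smul_const z
      simpa using this.const_add y
    refine mem_closure_of_tendsto ht (Filter.Eventually.of_forall fun m => ?_)
    have : (m : ℝ) + 1 ≠ 0 := by positivity
    simp [hy, hz, this]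
  · exact subset_closure hy

lemma exists_clear {n : ℕ} (q : Matrix (Fin (n+1)) (Fin (n+1)) ℚ) :
    ∃ lam : ℕ, lam ≠ 0 ∧ ∃ M : Matrix (Fin (n+1)) (Fin (n+1)) ℤ,
      ∀ i j, (lam : ℝ) * (q i j : ℝ) = (M i j : ℝ) := by
  refine ⟨∏ i, ∏ j, (q i j).den, ?_, ?_⟩
  · simp [Finset.prod_ne_zero_iff]
  have : ∀ i j, ∃ m : ℤ, ((∏ i, ∏ j, (q i j).den : ℕ) : ℝ) * (q i j : ℝ) = (m : ℝ) := by
    intro i j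
    obtain ⟨c, hc⟩ : (q i j).den ∣ ∏ i, ∏ j, (q i j).den :=
      (Finset.dvd_prod_of_mem (fun j => (q i j).den) (Finset.mem_univ j)).trans
        (Finset.dvd_prod_of_mem (fun i => ∏ j, (q i j).den) (Finset.mem_univ i))
    refine ⟨c * (q i j).num, ?_⟩
    rw [hc]
    have := Rat.mul_den_eq_num (q i j)
    have h2 : (q i j : ℝ) * ((q i j).den : ℝ) = ((q i j).num : ℝ) := by exact_mod_cast this
    push_cast
    rw [← h2]
    ring
  choose M hM using this
  exact ⟨M, hM⟩

lemma dense_rat {n : ℕ} : DenseRange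
    (fun q : Matrix (Fin (n+1)) (Fin (n+1)) ℚ => q.map (fun x : ℚ => (x : ℝ))) := by
  have h1 : DenseRange (fun x : ℚ => (x : ℝ)) := Rat.denseRange_cast
  exact DenseRange.piMap (fun _ => DenseRange.piMap (fun _ => h1))

lemma strict_mem_closure (K : Type*) [Field K] (n : ℕ) (hn : 1 ≤ n)
    (sig : Fin (n+1) → ℤ) (hpos : ∀ i, 0 < sig i)
    (Q : Matrix (Fin (n+1)) (Fin (n+1)) ℝ) (hrow : Q *ᵥ 1 = 0)
    (hsig : (fun i => (sig i : ℝ)) ᵥ* Q = 0) (hneg : ∀ i j, i ≠ j → Q i j < 0) :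
      Q ∈ closure {Q' : Matrix (Fin (n+1)) (Fin (n+1)) ℝ | Q' ∈ coneCSig n sig ∧
        (∀ i j, ∃ q : ℚ, Q' i j = (q : ℝ)) ∧
        ∃ lam : ℕ, lam ≠ 0 ∧ ∃ M : Matrix (Fin (n+1)) (Fin (n+1)) ℤ,
          (∀ i j, (lam : ℝ) * Q' i j = (M i j : ℝ)) ∧
          IsGenericLatticeIdeal K n
            (Submodule.span ℤ (Set.range (fun i => M i)) : Set (Fin (n+1) → ℤ))} := by
  classical
  rw [mem_closure_iff]
  intro O hO hQO
  have hposR : ∀ i, (0:ℝ) < sig i := fun i => by exact_mod_cast hpos i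
  obtain ⟨A, B, hA, hB, hAB⟩ := exists_proj sig hpos
  obtain ⟨R, hR, hRQ⟩ : ∃ R : ℝ, 0 ≤ R ∧ ∀ i k j, i ≠ j → k ≠ j →
      -((sig i : ℝ) * Q i j) < R * -((sig k : ℝ) * Q k j) := by
    let f : Fin (n+1) × Fin (n+1) × Fin (n+1) → ℝ := fun p =>
      |((sig p.1 : ℝ) * Q p.1 p.2.2) / ((sig p.2.1 : ℝ) * Q p.2.1 p.2.2)|
    refine ⟨1 + ∑ p, f p, by have : 0 ≤ ∑ p, f p := Finset.sum_nonneg (fun p _ => abs_nonneg _)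
                             linarith, ?_⟩
    intro i k j hi hk
    have h1 : f (i, k, j) ≤ ∑ p, f p :=
      Finset.single_le_sum (fun p _ => abs_nonneg _) (Finset.mem_univ (i, k, j))
    have hp : 0 < -((sig k : ℝ) * Q k j) := by
      have := mul_pos (hposR k) (neg_pos.2 (hneg k j hk)); linarith
    rw [← div_lt_iff₀ hp]
    have h2 : -((sig i : ℝ) * Q i j) / -((sig k : ℝ) * Q k j) ≤ f (i, k, j) := by
      rw [neg_div_neg_eq]; exact le_abs_self _
    linarith
  set T := thr ((n+1) * R) (n+2) with hT
  let F : Finset (Fin (n+1) → ℤ) := Finset.Icc 0 (fun i => ⌈(sig i : ℝ) * (1 + T)⌉)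
  have hF : ∀ a : Fin (n+1) → ℤ, (∀ i, 0 ≤ a i) →
      (∀ i, (a i : ℝ) / sig i ≤ 1 + T) → a ∈ F := by
    intro a h0 h1
    simp only [F, Finset.mem_Icc]
    refine ⟨fun i => h0 i, fun i => ?_⟩
    have := h1 i
    rw [div_le_iff₀ (hposR i)] at this
    have h2 : (a i : ℝ) ≤ ⌈(sig i : ℝ) * (1 + T)⌉ := by
      refine le_trans ?_ (Int.le_ceil _)
      linarith
    exact_mod_cast h2
  let Φ : Matrix (Fin (n+1)) (Fin (n+1)) ℝ → Matrix (Fin (n+1)) (Fin (n+1)) ℝ := fun Y =>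
    A.map (fun x : ℚ => (x : ℝ)) * Y * B.map (fun x : ℚ => (x : ℝ))
  have hΦc : Continuous Φ := by fun_prop
  have hΦQ : Φ Q = Q := hAB Q hsig hrow
  let U : Set (Matrix (Fin (n+1)) (Fin (n+1)) ℝ) := O ∩
    ({Y | ∀ i j, i ≠ j → Y i j < 0} ∩ {Y | ∀ i k j, i ≠ j → k ≠ j →
      -((sig i : ℝ) * Y i j) < R * -((sig k : ℝ) * Y k j)})
  have hU : IsOpen U := by
    refine hO.inter (IsOpen.inter ?_ ?_)
    · simp only [Set.setOf_forall]
      refine isOpen_iInter_of_finite fun i => isOpen_iInter_of_finite fun j =>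
        isOpen_iInter_of_finite fun _ => isOpen_lt ?_ continuous_const
      fun_prop
    · simp only [Set.setOf_forall]
      refine isOpen_iInter_of_finite fun i => isOpen_iInter_of_finite fun k =>
        isOpen_iInter_of_finite fun j => isOpen_iInter_of_finite fun _ =>
        isOpen_iInter_of_finite fun _ => isOpen_lt ?_ ?_
      · fun_prop
      · fun_prop
  have hQU : Q ∈ U := ⟨hQO, hneg, hRQ⟩
  let ι := {a : Fin (n+1) → ℤ // a ∈ F ∧ ∃ i k, a i * sig k ≠ a k * sig i} × Fin (n+1)
  let l : ι → (Matrix (Fin (n+1)) (Fin (n+1)) ℝ →ₗ[ℝ] ℝ) := fun p =>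
    { toFun := fun Y => ((fun i => (p.1.1 i : ℝ)) ᵥ* Φ Y) p.2
      map_add' := by intro x y; simp [Φ, Matrix.mul_add, Matrix.add_mul, Matrix.vecMul_add]
      map_smul' := by intro c x; simp [Φ, Matrix.vecMul_smul] }
  have hlc : ∀ p, Continuous (l p) := by
    intro p
    show Continuous (fun Y => ((fun i => (p.1.1 i : ℝ)) ᵥ* Φ Y) p.2)
    fun_prop
  have hfin : Finite ι := by
    have : Finite {a : Fin (n+1) → ℤ // a ∈ F ∧ ∃ i k, a i * sig k ≠ a k * sig i} :=
      Set.Finite.subset F.finite_toSet (fun a ha => ha.1)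
    exact inferInstance
  haveI : BaireSpace (Matrix (Fin (n+1)) (Fin (n+1)) ℝ) :=
    inferInstanceAs (BaireSpace (Fin (n+1) → Fin (n+1) → ℝ))
  have hG : Dense (⋂ p : ι, {Y | l p Y ≠ 0}) := by
    apply dense_iInter_of_isOpen
    · intro p
      exact isOpen_ne_fun (hlc p) continuous_const
    · rintro ⟨⟨a, haF, i, k, hik⟩, j⟩
      obtain ⟨j', hj'⟩ : ∃ j' : Fin (n+1), j' ≠ j := by
        haveI : Nontrivial (Fin (n+1)) := Fin.nontrivial_iff_two_le.2 (by omega)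
        exact exists_ne j
      let w : Fin (n+1) → ℝ := Pi.single i (sig k : ℝ) - Pi.single k (sig i : ℝ)
      let e : Fin (n+1) → ℝ := Pi.single j 1 - Pi.single j' 1
      have hw : (fun i => (sig i : ℝ)) ⬝ᵥ w = 0 := by
        simp [w, dotProduct_sub, mul_comm]
      have he : e ⬝ᵥ 1 = 0 := by
        simp [e, sub_dotProduct]
      have haw : (fun i => (a i : ℝ)) ⬝ᵥ w ≠ 0 := by
        simp only [w, dotProduct_sub, dotProduct_single]
        rw [sub_ne_zero]
        exact_mod_cast hik
      apply dense_ne _ (vecMulVec w e)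
      have : Φ (vecMulVec w e) = vecMulVec w e := by
        apply hAB
        · rw [Matrix.vecMul_vecMulVec, hw, zero_smul]
        · rw [Matrix.vecMulVec_mulVec, he]; simp
      show ((fun i => (a i : ℝ)) ᵥ* Φ (vecMulVec w e)) j ≠ 0
      rw [this, Matrix.vecMul_vecMulVec]
      have hej : e j = 1 := by simp [e, hj'.symm]
      simpa [hej] using haw
  have hGo : IsOpen (⋂ p : ι, {Y | l p Y ≠ 0}) :=
    isOpen_iInter_of_finite fun p => isOpen_ne_fun (hlc p) continuous_const
  have hU' : IsOpen (Φ ⁻¹' U) := hU.preimage hΦc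
  have hne : (Φ ⁻¹' U ∩ ⋂ p : ι, {Y | l p Y ≠ 0}).Nonempty :=
    hG.inter_open_nonempty _ hU' ⟨Q, by show Φ Q ∈ U; rw [hΦQ]; exact hQU⟩
  obtain ⟨q, hqU, hqG⟩ := dense_rat.exists_mem_open (hU'.inter hGo) hne
  set q' : Matrix (Fin (n+1)) (Fin (n+1)) ℚ := A * q * B with hq'
  have hΦq : Φ (q.map (fun x : ℚ => (x : ℝ))) = q'.map (fun x : ℚ => (x : ℝ)) := by
    have hmul : ∀ x y : Matrix (Fin (n+1)) (Fin (n+1)) ℚ, (x * y).map (fun x : ℚ => (x : ℝ))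
        = x.map (fun x : ℚ => (x : ℝ)) * y.map (fun x : ℚ => (x : ℝ)) := by
      intro x y
      exact Matrix.map_mul (f := Rat.castHom ℝ)
    rw [hq', hmul, hmul]
  set Q' : Matrix (Fin (n+1)) (Fin (n+1)) ℝ := Φ (q.map (fun x : ℚ => (x : ℝ))) with hQ'
  have hQ'q : ∀ i j, Q' i j = (q' i j : ℝ) := by intro i j; rw [hΦq]; rfl
  obtain ⟨hQ'O, hQ'neg, hQ'R⟩ : Q' ∈ U := hqU
  have hQ'row : Q' *ᵥ 1 = 0 := by
    simp only [hQ', Φ]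
    rw [← Matrix.mulVec_mulVec, hB, Matrix.mulVec_zero]
  have hQ'sig : (fun i => (sig i : ℝ)) ᵥ* Q' = 0 := by
    simp only [hQ', Φ]
    rw [← Matrix.vecMul_vecMul, ← Matrix.vecMul_vecMul, hA, Matrix.zero_vecMul, Matrix.zero_vecMul]
  have hQ'row' : ∀ i, ∑ j, Q' i j = 0 := by
    intro i
    have := congrFun hQ'row i
    simpa [Matrix.mulVec, dotProduct] using this
  refine ⟨Q', hQ'O, ⟨hQ'row', fun i j h => (hQ'neg i j h).le, hQ'sig,
    fun i j h => Relation.TransGen.single ⟨h, hQ'neg i j h⟩⟩, fun i j => ⟨q' i j, hQ'q i j⟩, ?_⟩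
  obtain ⟨lam, hlam, M, hM⟩ := exists_clear q'
  have hM' : ∀ i j, (M i j : ℝ) = (lam : ℝ) * Q' i j := by intro i j; rw [hQ'q, hM]
  have hlamR : (0 : ℝ) < lam := by exact_mod_cast Nat.pos_of_ne_zero hlam
  have hvec : ∀ (a : Fin (n+1) → ℤ) j, (((a ᵥ* M) j : ℤ) : ℝ)
      = lam * ((fun i => (a i : ℝ)) ᵥ* Q') j := by
    intro a j
    simp only [Matrix.vecMul, dotProduct]
    push_cast
    rw [Finset.mul_sum]
    refine Finset.sum_congr rfl fun i _ => ?_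
    rw [hM']; ring
  refine ⟨lam, hlam, M, fun i j => (hM' i j).symm, ?_⟩
  refine generic_of sig hpos R hR M ?_ ?_ ?_ ?_ F hF ?_
  · intro i
    have : ((∑ j, M i j : ℤ) : ℝ) = 0 := by
      push_cast
      simp only [hM']
      rw [← Finset.mul_sum, hQ'row', mul_zero]
    exact_mod_cast this
  · funext j
    have := hvec sig j
    rw [hQ'sig] at this
    simpa using this
  · intro i j h
    have : (M i j : ℝ) < 0 := by
      rw [hM']; exact mul_neg_of_pos_of_neg hlamR (hQ'neg i j h)
    exact_mod_cast this
  · intro i k j h1 h2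
    rw [hM', hM']
    have := mul_le_mul_of_nonneg_left (hQ'R i k j h1 h2).le hlamR.le
    linarith
  · intro a ha hp j h0
    have h1 := Set.mem_iInter.1 hqG (⟨a, ha, hp⟩, j)
    have h2 : ((fun i => (a i : ℝ)) ᵥ* Q') j ≠ 0 := h1
    have h3 := hvec a j
    rw [h0] at h3
    simp [hlam, h2] at h3
theorem stmt12 (K : Type*) [Field K] (n : ℕ) (hn : 1 ≤ n)
    (sig : Fin (n+1) → ℤ) (hpos : ∀ i, 0 < sig i)
    (hgcd : Finset.univ.gcd sig = 1) :
    ∀ Q ∈ coneCSig n sig,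
      Q ∈ closure {Q' : Matrix (Fin (n+1)) (Fin (n+1)) ℝ | Q' ∈ coneCSig n sig ∧
        (∀ i j, ∃ q : ℚ, Q' i j = (q : ℝ)) ∧
        ∃ lam : ℕ, lam ≠ 0 ∧ ∃ M : Matrix (Fin (n+1)) (Fin (n+1)) ℤ,
          (∀ i j, (lam : ℝ) * Q' i j = (M i j : ℝ)) ∧
          IsGenericLatticeIdeal K n
            (Submodule.span ℤ (Set.range (fun i => M i)) : Set (Fin (n+1) → ℤ))} := by
  intro Q hQ
  obtain ⟨h1, h2, h3, _⟩ := hQ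
  have hposR : ∀ i, (0:ℝ) < sig i := fun i => by exact_mod_cast hpos i
  let P : Matrix (Fin (n+1)) (Fin (n+1)) ℝ :=
    (∑ i, (sig i : ℝ)) • 1 - vecMulVec 1 (fun i => (sig i : ℝ))
  have hP1 : P *ᵥ 1 = 0 := by
    simp only [P]
    rw [Matrix.sub_mulVec, Matrix.smul_mulVec, Matrix.vecMulVec_mulVec]
    funext j
    simp [dotProduct]
  have hP2 : (fun i => (sig i : ℝ)) ᵥ* P = 0 := by
    simp only [P]
    rw [Matrix.vecMul_sub, Matrix.vecMul_smul, Matrix.vecMul_vecMulVec]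
    funext j
    simp [dotProduct]
  have hP3 : ∀ i j, i ≠ j → P i j < 0 := by
    intro i j h
    simp [P, vecMulVec_apply, h, hpos j]
  have hQ1 : Q *ᵥ 1 = 0 := by
    funext i
    simpa [Matrix.mulVec, dotProduct] using h1 i
  have ht : Filter.Tendsto (fun m : ℕ => Q + (1 / ((m : ℝ) + 1)) • P) Filter.atTop (nhds Q) := by
    have := (tendsto_one_div_add_atTop_nhds_zero_nat (𝕜 := ℝ)).smul_const P
    simpa using this.const_add Q
  rw [← closure_closure]
  refine mem_closure_of_tendsto ht (Filter.Eventually.of_forall fun m => ?_)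
  apply strict_mem_closure K n hn sig hpos
  · rw [Matrix.add_mulVec, Matrix.smul_mulVec, hP1, hQ1]; simp
  · rw [Matrix.vecMul_add, Matrix.vecMul_smul, hP2, h3]; simp
  · intro i j h
    have hm : (0:ℝ) < 1 / ((m : ℝ) + 1) := by positivity
    have := mul_neg_of_pos_of_neg hm (hP3 i j h)
    have h4 := h2 i j h
    simp only [Matrix.add_apply, Matrix.smul_apply, smul_eq_mul]
    linarith
end

section
/- Let n ≥ 1 and let Σ : Fin (n+1) → ℤ be strictly positive with gcd of entries 1. Let C_Σ be the set of real matrices Q : Matrix (Fin (n+1)) (Fin (n+1)) ℝ with all row sums zero, Q i j ≤ 0 for i ≠ j, Matrix.vecMul (fun i => (Σ i : ℝ)) Q = 0, and strongly connected support digraph (edge from i to j iff i ≠ j and Q i j < 0). Then the topological closure of C_Σ in the space of real (n+1)×(n+1) matrices equals the set of all matrices Q with all row sums zero, Q i j ≤ 0 for i ≠ j, and Matrix.vecMul (fun i => (Σ i : ℝ)) Q = 0. -/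
open Matrix

theorem stmt14 (n : ℕ) (hn : 1 ≤ n)
    (sig : Fin (n+1) → ℤ) (hpos : ∀ i, 0 < sig i)
    (hgcd : Finset.univ.gcd sig = 1) :
    closure (coneCSig n sig)
      = {Q : Matrix (Fin (n+1)) (Fin (n+1)) ℝ |
          (∀ i, ∑ j, Q i j = 0) ∧
          (∀ i j, i ≠ j → Q i j ≤ 0) ∧
          Matrix.vecMul (fun i => (sig i : ℝ)) Q = 0} := by
  apply Set.Subset.antisymm
  · apply closure_minimal
    · rintro Q ⟨h1, h2, h3, -⟩
      exact ⟨h1, h2, h3⟩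
    · have e : ∀ i j, Continuous fun Q : Matrix (Fin (n+1)) (Fin (n+1)) ℝ => Q i j :=
        fun i j => continuous_id.matrix_elem i j
      refine IsClosed.inter (s₁ := {Q : Matrix (Fin (n+1)) (Fin (n+1)) ℝ | ∀ i, ∑ j, Q i j = 0}) ?_
        (IsClosed.inter (s₁ := {Q : Matrix (Fin (n+1)) (Fin (n+1)) ℝ | ∀ i j, i ≠ j → Q i j ≤ 0}) ?_ ?_)
      · simp only [Set.setOf_forall]
        exact isClosed_iInter fun i =>
          isClosed_eq (continuous_finsetSum _ fun j _ => e i j) continuous_const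
      · simp only [Set.setOf_forall]
        exact isClosed_iInter fun i => isClosed_iInter fun j => isClosed_iInter fun _ =>
          isClosed_le (e i j) continuous_const
      · exact isClosed_eq (Continuous.matrix_vecMul continuous_const continuous_id)
          continuous_const
  · rintro Q ⟨h1, h2, h3⟩
    let S : ℝ := ∑ j, (sig j : ℝ)
    let P : Matrix (Fin (n+1)) (Fin (n+1)) ℝ :=
      fun i j => (if i = j then S else 0) - (sig j : ℝ)
    have hsig : ∀ j, (0 : ℝ) < sig j := fun j => by exact_mod_cast hpos j
    have hP1 : ∀ i, ∑ j, P i j = 0 := by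
      intro i
      simp [P, S, Finset.sum_sub_distrib]
    have hP3 : Matrix.vecMul (fun i => (sig i : ℝ)) P = 0 := by
      funext j
      simp [P, S, Matrix.vecMul, dotProduct, mul_sub, Finset.sum_sub_distrib,
        Finset.mul_sum, mul_comm]
    have hP2 : ∀ i j, i ≠ j → P i j < 0 := by
      intro i j hij
      simpa [P, hij] using hpos j
    have ht : Filter.Tendsto (fun k : ℕ => Q + (1 / ((k : ℝ) + 1)) • P) Filter.atTop
        (nhds Q) := by
      have := (tendsto_one_div_add_atTop_nhds_zero_nat (𝕜 := ℝ)).smul_const P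
      simpa using this.const_add Q
    refine mem_closure_of_tendsto ht (Filter.Eventually.of_forall fun k => ?_)
    have hk : (0 : ℝ) < 1 / ((k : ℝ) + 1) := by positivity
    generalize 1 / ((k : ℝ) + 1) = c at hk
    have hneg : ∀ i j, i ≠ j → (Q + c • P) i j < 0 := by
      intro i j hij
      have a := h2 i j hij
      have b := mul_neg_of_pos_of_neg hk (hP2 i j hij)
      simp only [Matrix.add_apply, Matrix.smul_apply, smul_eq_mul]
      linarith
    refine ⟨fun i => ?_, fun i j hij => (hneg i j hij).le, ?_, fun i j hij =>
      Relation.TransGen.single ⟨hij, hneg i j hij⟩⟩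
    · simp only [Matrix.add_apply, Matrix.smul_apply, smul_eq_mul, Finset.sum_add_distrib,
        ← Finset.mul_sum, h1, hP1, mul_zero, add_zero]
    · rw [Matrix.vecMul_add, Matrix.vecMul_smul, h3, hP3, smul_zero, add_zero]
end

section
/- Let n ≥ 1, let A : Matrix (Fin (n+1)) (Fin (n+1)) ℕ with zero diagonal be the adjacency matrix of a strongly connected directed multigraph with Laplacian Q = D − A, and let Σ : Fin (n+1) → ℤ be the strictly positive vector with gcd of entries 1 spanning the left kernel of Q (Matrix.vecMul Σ Q = 0). Let L ⊆ ℤ^{n+1} be the ℤ-span of the rows of Q, let π : ℤ^{n+1} → ℤ^n be the projection deleting the coordinate indexed by 0, and let Q̃ : Matrix (Fin n) (Fin n) ℤ be the reduced Laplacian obtained from Q by deleting the row and column indexed by 0. Then π(L) equals the ℤ-span of the rows of Q̃ if and only if Σ 0 = 1. -/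
open Matrix

theorem lap_col {n : ℕ} (A : Matrix (Fin (n+1)) (Fin (n+1)) ℕ) (w : Fin (n+1) → ℤ)
    (h : Matrix.vecMul w (lap A) = 0) (m : Fin (n+1)) :
    w m * (∑ j, (A m j : ℤ)) = ∑ i, w i * (A i m : ℤ) := by
  have h1 := congrFun h m
  rw [lap, Matrix.vecMul_sub, Pi.sub_apply, Matrix.vecMul_diagonal] at h1
  simp only [Matrix.vecMul, dotProduct, Matrix.map_apply, Pi.zero_apply] at h1
  linarith

theorem lap_row_sum {n : ℕ} (A : Matrix (Fin (n+1)) (Fin (n+1)) ℕ) (i : Fin (n+1)) :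
    ∑ j, lap A i j = 0 := by
  simp [lap, Matrix.diagonal_apply]

theorem nonneg_ker_zero {n : ℕ} (A : Matrix (Fin (n+1)) (Fin (n+1)) ℕ)
    (hsc : StronglyConnected A) (w : Fin (n+1) → ℤ) (hw : ∀ i, 0 ≤ w i)
    (h : Matrix.vecMul w (lap A) = 0) (m : Fin (n+1)) (hm : w m = 0) : ∀ i, w i = 0 := by
  have step : ∀ a b, 0 < A a b → w b = 0 → w a = 0 := by
    intro a b hab hb
    have h1 := lap_col A w h b
    rw [hb, zero_mul] at h1
    have h2 := (Finset.sum_eq_zero_iff_of_nonneg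
      (fun i _ => mul_nonneg (hw i) (Int.natCast_nonneg (A i b)))).1 h1.symm a (Finset.mem_univ a)
    rcases mul_eq_zero.1 h2 with h3 | h3
    · exact h3
    · exfalso
      have : A a b = 0 := by exact_mod_cast h3
      omega
  intro i
  by_cases him : i = m
  · rw [him, hm]
  · have ht := hsc i m him
    induction ht using Relation.TransGen.head_induction_on with
    | single h => exact step _ _ h hm
    | head h' _ ih =>
      rename_i a c _
      by_cases hc : c = m
      · exact step _ _ h' (by rw [hc, hm])
      · exact step _ _ h' (ih hc)

theorem ker_zero {n : ℕ} (A : Matrix (Fin (n+1)) (Fin (n+1)) ℕ)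
    (hsc : StronglyConnected A) (sig : Fin (n+1) → ℤ) (hpos : ∀ i, 0 < sig i)
    (hker : Matrix.vecMul sig (lap A) = 0) (y : Fin (n+1) → ℤ)
    (hy : Matrix.vecMul y (lap A) = 0) (h0 : y 0 = 0) : ∀ i, y i = 0 := by
  obtain ⟨m, hm⟩ := Finite.exists_min (fun i => (y i : ℚ) / (sig i : ℚ))
  have hw := nonneg_ker_zero A hsc (sig m • y - y m • sig) (by
    intro i
    have h1 := hm i
    have hp1 : (0 : ℚ) < sig m := by exact_mod_cast hpos m
    have hp2 : (0 : ℚ) < sig i := by exact_mod_cast hpos i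
    rw [div_le_div_iff₀ hp1 hp2] at h1
    have h2 : y m * sig i ≤ y i * sig m := by exact_mod_cast h1
    simp only [Pi.sub_apply, Pi.smul_apply, smul_eq_mul]
    linarith) (by
    rw [Matrix.sub_vecMul, Matrix.smul_vecMul, Matrix.smul_vecMul, hy, hker]; simp) m (by
    simp [mul_comm])
  have hym : y m = 0 := by
    have h1 := hw 0
    simp only [Pi.sub_apply, Pi.smul_apply, smul_eq_mul, h0] at h1
    have := (hpos 0).ne'
    simpa [this] using h1
  intro i
  have h1 := hw i
  simp only [Pi.sub_apply, Pi.smul_apply, smul_eq_mul, hym] at h1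
  have := (hpos m).ne'
  simpa [this] using h1

theorem stmt15 (n : ℕ) (hn : 1 ≤ n) (A : Matrix (Fin (n+1)) (Fin (n+1)) ℕ)
    (hdiag : ∀ i, A i i = 0) (hsc : StronglyConnected A)
    (sig : Fin (n+1) → ℤ) (hpos : ∀ i, 0 < sig i)
    (hker : Matrix.vecMul sig (lap A) = 0)
    (hgcd : Finset.univ.gcd sig = 1) :
    Submodule.map (LinearMap.funLeft ℤ ℤ (Fin.succ : Fin n → Fin (n+1)))
        (Submodule.span ℤ (Set.range (fun i => lap A i)))
      = Submodule.span ℤ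
          (Set.range (fun i : Fin n => fun j : Fin n => lap A i.succ j.succ))
    ↔ sig 0 = 1 := by
  rw [Submodule.map_span, ← Set.range_comp]
  constructor
  · intro h
    have h0 : (fun j : Fin n => lap A 0 j.succ) ∈ Submodule.span ℤ
        (Set.range (fun i : Fin n => fun j : Fin n => lap A i.succ j.succ)) := by
      rw [← h]
      exact Submodule.subset_span ⟨0, rfl⟩
    rw [Submodule.mem_span_range_iff_exists_fun] at h0
    obtain ⟨c, hc⟩ := h0
    have hx : Matrix.vecMul (Fin.cons 1 (fun i => - c i) : Fin (n+1) → ℤ) (lap A) = 0 := by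
      set x : Fin (n+1) → ℤ := Fin.cons 1 (fun i => - c i) with hxdef
      have hs : ∀ j : Fin n, Matrix.vecMul x (lap A) j.succ = 0 := by
        intro j
        have h1 := congrFun hc j
        simp only [Finset.sum_apply, Pi.smul_apply, smul_eq_mul] at h1
        simp only [Matrix.vecMul, dotProduct, Fin.sum_univ_succ, hxdef, Fin.cons_zero,
          Fin.cons_succ, neg_mul, Finset.sum_neg_distrib]
        linarith
      have hsum : ∑ j, Matrix.vecMul x (lap A) j = 0 := by
        simp only [Matrix.vecMul, dotProduct]
        rw [Finset.sum_comm]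
        simp only [← Finset.mul_sum, lap_row_sum, mul_zero, Finset.sum_const_zero]
      rw [Fin.sum_univ_succ] at hsum
      simp only [hs, Finset.sum_const_zero, add_zero] at hsum
      funext j
      refine Fin.cases hsum hs j
    have hy := ker_zero A hsc sig hpos hker
      (sig 0 • (Fin.cons 1 (fun i => - c i) : Fin (n+1) → ℤ) - sig)
      (by rw [Matrix.sub_vecMul, Matrix.smul_vecMul, hx, hker]; simp) (by simp)
    have hd : sig 0 ∣ Finset.univ.gcd sig := by
      refine Finset.dvd_gcd fun i _ => ?_
      have h1 := hy i
      simp only [Pi.sub_apply, Pi.smul_apply, smul_eq_mul] at h1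
      exact ⟨_, (sub_eq_zero.1 h1).symm⟩
    rw [hgcd] at hd
    exact Int.eq_one_of_dvd_one (hpos 0).le hd
  · intro h
    apply le_antisymm
    · rw [Submodule.span_le]
      rintro _ ⟨i, rfl⟩
      refine Fin.cases ?_ (fun i => ?_) i
      · rw [SetLike.mem_coe, Submodule.mem_span_range_iff_exists_fun]
        refine ⟨fun i => - sig i.succ, ?_⟩
        funext j
        have h1 := congrFun hker j.succ
        simp only [Matrix.vecMul, dotProduct, Fin.sum_univ_succ, h, Pi.zero_apply] at h1
        simp only [Finset.sum_apply, Pi.smul_apply, smul_eq_mul, neg_mul,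
          Finset.sum_neg_distrib, Function.comp_apply, LinearMap.funLeft_apply]
        linarith
      · exact Submodule.subset_span ⟨i, rfl⟩
    · rw [Submodule.span_le]
      rintro _ ⟨i, rfl⟩
      exact Submodule.subset_span ⟨i.succ, rfl⟩
end

section
/- Let n ≥ 1 and let Q : Matrix (Fin (n+1)) (Fin (n+1)) ℝ satisfy: all row sums of Q are zero, Q i j ≤ 0 for all i ≠ j, and the support digraph of Q (edge from i to j iff i ≠ j and Q i j < 0) is strongly connected. Then there exists a vector Σ : Fin (n+1) → ℝ with every entry strictly positive such that {w : Fin (n+1) → ℝ | Matrix.vecMul w Q = 0} is exactly the set of real scalar multiples of Σ. -/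
open Matrix

theorem ker_abs {m : ℕ} (Q : Matrix (Fin m) (Fin m) ℝ)
    (hrow : ∀ i, ∑ j, Q i j = 0)
    (hoff : ∀ i j, i ≠ j → Q i j ≤ 0)
    (w : Fin m → ℝ) (hw : ∀ j, ∑ i, w i * Q i j = 0) :
    ∀ j, ∑ i, |w i| * Q i j = 0 := by
  have hle : ∀ j, ∑ i, |w i| * Q i j ≤ 0 := by
    intro j
    have h1 := hw j
    rw [← Finset.add_sum_erase _ _ (Finset.mem_univ j)] at h1 ⊢
    have h2 : |w j| * Q j j ≤ |w j * Q j j| := by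
      rw [abs_mul]
      exact mul_le_mul_of_nonneg_left (le_abs_self _) (abs_nonneg _)
    have h3 : w j * Q j j = -∑ i ∈ Finset.univ.erase j, w i * Q i j := by linarith
    have h4 : |∑ i ∈ Finset.univ.erase j, w i * Q i j|
        ≤ ∑ i ∈ Finset.univ.erase j, |w i * Q i j| := Finset.abs_sum_le_sum_abs _ _
    have h5 : ∑ i ∈ Finset.univ.erase j, |w i * Q i j|
        = -∑ i ∈ Finset.univ.erase j, |w i| * Q i j := by
      rw [← Finset.sum_neg_distrib]
      refine Finset.sum_congr rfl fun i hi => ?_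
      rw [abs_mul, abs_of_nonpos (hoff i j (Finset.ne_of_mem_erase hi))]
      ring
    rw [h3, abs_neg] at h2
    linarith
  have hsum : ∑ j, ∑ i, |w i| * Q i j = 0 := by
    rw [Finset.sum_comm]
    refine Finset.sum_eq_zero fun i _ => ?_
    rw [← Finset.mul_sum, hrow, mul_zero]
  intro j
  exact (Finset.sum_eq_zero_iff_of_nonpos (fun j _ => hle j)).1 hsum j (Finset.mem_univ j)

theorem ker_zero_s16 {m : ℕ} (Q : Matrix (Fin m) (Fin m) ℝ)
    (hrow : ∀ i, ∑ j, Q i j = 0)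
    (hoff : ∀ i j, i ≠ j → Q i j ≤ 0)
    (hsc : ∀ i j : Fin m, i ≠ j →
      Relation.TransGen (fun a b => a ≠ b ∧ Q a b < 0) i j)
    (w : Fin m → ℝ) (hw : ∀ j, ∑ i, w i * Q i j = 0) (j : Fin m) (hj : w j = 0) :
    ∀ i, w i = 0 := by
  have habs := ker_abs Q hrow hoff w hw
  have step : ∀ a b, (a ≠ b ∧ Q a b < 0) → w b = 0 → w a = 0 := by
    rintro a b ⟨hab, hQ⟩ hb
    have hn : ∀ i ∈ Finset.univ, |w i| * Q i b ≤ 0 := by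
      intro i _
      by_cases h : i = b
      · subst h; simp [hb]
      · exact mul_nonpos_of_nonneg_of_nonpos (abs_nonneg _) (hoff i b h)
    have h := (Finset.sum_eq_zero_iff_of_nonpos hn).1 (habs b) a (Finset.mem_univ a)
    rcases mul_eq_zero.1 h with h | h
    · exact abs_eq_zero.1 h
    · exact absurd h hQ.ne
  intro i
  by_cases hij : i = j
  · rw [hij, hj]
  · have h := hsc i j hij
    induction h using Relation.TransGen.head_induction_on with
    | single h => exact step _ _ h hj
    | head h _ ih =>
      rename_i a c _
      by_cases hc : c = j
      · exact step _ _ h (hc ▸ hj)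
      · exact step _ _ h (ih hc)

theorem stmt16 (n : ℕ) (hn : 1 ≤ n)
    (Q : Matrix (Fin (n+1)) (Fin (n+1)) ℝ)
    (hrow : ∀ i, ∑ j, Q i j = 0)
    (hoff : ∀ i j, i ≠ j → Q i j ≤ 0)
    (hsc : ∀ i j : Fin (n+1), i ≠ j →
      Relation.TransGen (fun a b => a ≠ b ∧ Q a b < 0) i j) :
    ∃ sig : Fin (n+1) → ℝ, (∀ i, 0 < sig i) ∧
      {w : Fin (n+1) → ℝ | Matrix.vecMul w Q = 0}
        = {w : Fin (n+1) → ℝ | ∃ c : ℝ, w = c • sig} := by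
  have key : ∀ w : Fin (n+1) → ℝ, Matrix.vecMul w Q = 0 ↔ ∀ j, ∑ i, w i * Q i j = 0 := by
    intro w
    rw [funext_iff]
    rfl
  have hdet : Q.det = 0 := by
    refine Matrix.exists_mulVec_eq_zero_iff.1 ⟨fun _ => 1, ?_, ?_⟩
    · intro h
      exact one_ne_zero (congrFun h 0)
    · funext i
      simpa [Matrix.mulVec, dotProduct] using hrow i
  obtain ⟨w, hw0, hw⟩ := Matrix.exists_vecMul_eq_zero_iff.2 hdet
  have hw' := (key w).1 hw
  have habs := ker_abs Q hrow hoff w hw'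
  have hpos : ∀ i, 0 < |w i| := by
    intro i
    rw [abs_pos]
    intro hi
    exact hw0 (funext (ker_zero_s16 Q hrow hoff hsc w hw' i hi))
  refine ⟨fun i => |w i|, hpos, ?_⟩
  ext v
  simp only [Set.mem_setOf_eq]
  constructor
  · intro hv
    have hv' := (key v).1 hv
    refine ⟨v 0 / |w 0|, ?_⟩
    have h := ker_zero_s16 Q hrow hoff hsc (fun i => v i - v 0 / |w 0| * |w i|) ?_ 0 ?_
    · funext i
      have := h i
      simp only [Pi.smul_apply, smul_eq_mul]
      linarith
    · intro j
      simp only [sub_mul, Finset.sum_sub_distrib, hv' j, mul_assoc, ← Finset.mul_sum, habs j]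
      simp
    · have := (hpos 0).ne'
      field_simp
      simp
  · rintro ⟨c, rfl⟩
    rw [Matrix.smul_vecMul, (key _).2 habs, smul_zero]
end

section
/- Let n ≥ 1 and let Σ : Fin (n+1) → ℝ be strictly positive. Let Q₁, Q₂ : Matrix (Fin (n+1)) (Fin (n+1)) ℝ both have all row sums zero and nonpositive off-diagonal entries, with Matrix.vecMul Σ Q₁ = 0 and Matrix.vecMul Σ Q₂ = 0, and suppose the support digraph of Q₁ (edge from i to j iff i ≠ j and Q₁ i j < 0) is strongly connected. Then for every real ε ≥ 0, the left kernel {w : Fin (n+1) → ℝ | Matrix.vecMul w (Q₁ + ε • Q₂) = 0} is exactly the set of real scalar multiples of Σ. -/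
open Matrix

theorem stmt17 (n : ℕ) (hn : 1 ≤ n) (sig : Fin (n+1) → ℝ) (hpos : ∀ i, 0 < sig i)
    (Q₁ Q₂ : Matrix (Fin (n+1)) (Fin (n+1)) ℝ)
    (hrow₁ : ∀ i, ∑ j, Q₁ i j = 0)
    (hoff₁ : ∀ i j, i ≠ j → Q₁ i j ≤ 0)
    (hrow₂ : ∀ i, ∑ j, Q₂ i j = 0)
    (hoff₂ : ∀ i j, i ≠ j → Q₂ i j ≤ 0)
    (hker₁ : Matrix.vecMul sig Q₁ = 0)
    (hker₂ : Matrix.vecMul sig Q₂ = 0)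
    (hsc : ∀ i j : Fin (n+1), i ≠ j →
      Relation.TransGen (fun a b => a ≠ b ∧ Q₁ a b < 0) i j) :
    ∀ ε : ℝ, 0 ≤ ε →
      {w : Fin (n+1) → ℝ | Matrix.vecMul w (Q₁ + ε • Q₂) = 0}
        = {w : Fin (n+1) → ℝ | ∃ c : ℝ, w = c • sig} := by
  intro ε hε
  ext w
  simp only [Set.mem_setOf_eq]
  have hsig : Matrix.vecMul sig (Q₁ + ε • Q₂) = 0 := by
    rw [Matrix.vecMul_add, Matrix.vecMul_smul, hker₁, hker₂]; simp
  constructor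
  · intro hw
    obtain ⟨k, -, hk⟩ := Finset.exists_min_image Finset.univ (fun i => w i / sig i)
      ⟨0, Finset.mem_univ _⟩
    refine ⟨w k / sig k, ?_⟩
    set c := w k / sig k with hc
    have hv : Matrix.vecMul (w - c • sig) (Q₁ + ε • Q₂) = 0 := by
      rw [Matrix.sub_vecMul, Matrix.smul_vecMul, hw, hsig]; simp
    have hnn : ∀ i, 0 ≤ (w - c • sig) i := by
      intro i
      have h := hk i (Finset.mem_univ _)
      have h2 : c * sig i ≤ w i := (le_div_iff₀ (hpos i)).1 h
      simp only [Pi.sub_apply, Pi.smul_apply, smul_eq_mul]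
      linarith
    have hvk : (w - c • sig) k = 0 := by
      have := (hpos k).ne'
      simp only [Pi.sub_apply, Pi.smul_apply, smul_eq_mul, hc]
      field_simp
      simp
    generalize hvdef : w - c • sig = v at hv hnn hvk
    have step : ∀ a b, (a ≠ b ∧ Q₁ a b < 0) → v b = 0 → v a = 0 := by
      rintro a b ⟨hab, hQ⟩ hb
      have hsum : ∑ i, v i * (Q₁ + ε • Q₂) i b = 0 := congrFun hv b
      have hle : ∀ i ∈ Finset.univ, v i * (Q₁ + ε • Q₂) i b ≤ 0 := by
        intro i _
        by_cases hib : i = b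
        · subst hib; simp [hb]
        · apply mul_nonpos_of_nonneg_of_nonpos (hnn i)
          have h1 := hoff₁ i b hib
          have h2 := mul_nonpos_of_nonneg_of_nonpos hε (hoff₂ i b hib)
          simp only [Matrix.add_apply, Matrix.smul_apply, smul_eq_mul]
          linarith
      have hz := (Finset.sum_eq_zero_iff_of_nonpos hle).1 hsum a (Finset.mem_univ _)
      rcases mul_eq_zero.1 hz with h | h
      · exact h
      · have h2 := mul_nonpos_of_nonneg_of_nonpos hε (hoff₂ a b hab)
        simp only [Matrix.add_apply, Matrix.smul_apply, smul_eq_mul] at h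
        linarith
    have hall : ∀ i, v i = 0 := by
      intro i
      by_cases hik : i = k
      · rw [hik]; exact hvk
      · induction hsc i k hik using Relation.TransGen.head_induction_on with
        | single h => exact step _ _ h hvk
        | head h _ ih =>
          rename_i a b _
          by_cases hbk : b = k
          · exact step _ _ h (by rw [hbk]; exact hvk)
          · exact step _ _ h (ih hbk)
    have : v = 0 := funext hall
    rw [this] at hvdef
    exact sub_eq_zero.1 hvdef
  · rintro ⟨c, rfl⟩
    rw [Matrix.smul_vecMul, hsig, smul_zero]
end
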